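/- arXiv:2506.20909 — 3 statements merged into one kernel-verified Lean document; each statement's English description precedes it below -/
import Mathlib

section
/- For every ν ∈ ℕ and every polynomial P ∈ ℤ[a, z₁, …, z_ν], there exists a polynomial Q̃ ∈ ℤ[a, z₁, …, z₁₁] in 11 unknowns such that for all a ∈ ℕ: (∃ z₁, …, z_ν ∈ ℕ with P(a, z₁, …, z_ν) = 0) if and only if (∃ z₁, …, z₁₁ ∈ ℤ with Q̃(a, z₁, …, z₁₁) = 0). -/
/-!
Homogenize `P` to a form `F`. In a positional encoding with a large base `β`, a vector `z` of
natural numbers becomes a single number `g`, and the value of `F` at `(1, a, z)` is, up to a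
factorial, one digit of `c ^ δ` times a number depending only on `F` and `β`, where `c` arises from
`g` by adding digits for `1` and `a`. That `g` encodes a vector and that this digit vanishes are
conditions on binary digits. Since the exponent of `2` in `C(2X, X)` is the number of ones in the
binary expansion of `X`, both amount to the divisibility of one central binomial coefficient by a
power of two.

By the method of Matiyasevich and Robinson, `C(2X, X)` modulo a number is read off a quotient of two
solutions of Pell equations. The divisibility then becomes the conjunction of two squareness
conditions, one divisibility and one inequality in the unknowns `f`, `g`, `h`, `k`, `l`, `w`, `x`,
`y`. Following Sun, a conjunction of this shape costs only three more integer unknowns: a positive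
non-square `d` has nontrivial solutions of `X ^ 2 - d Y ^ 2 = 1`, which expresses the inequality by
a further square, and a product over the signs of the square roots expresses that two numbers are
squares together with a divisibility.
-/

/-! ### Pell equations -/

section PellForm

variable {R S : Type*} [CommRing R] [CommRing S]

/-- The form `(a² - 1) Y² + 1`, whose square values are the `X²` with `X² - (a² - 1) Y² = 1`. -/
def pellForm (a Y : R) : R := (a ^ 2 - 1) * Y ^ 2 + 1

theorem map_pellForm (f : R →+* S) (a Y : R) : f (pellForm a Y) = pellForm (f a) (f Y) := by
  simp [pellForm]

theorem one_le_pellForm {a : ℤ} (ha : 1 ≤ a) (Y : ℤ) : 1 ≤ pellForm a Y := by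
  have : 0 ≤ (a ^ 2 - 1) * Y ^ 2 := mul_nonneg (by nlinarith) (sq_nonneg Y)
  unfold pellForm
  linarith

theorem dvd_pellForm_sub_pellForm {m a a' Y Y' : R} (ha : m ∣ a - a') (hY : m ∣ Y - Y') :
    m ∣ pellForm a Y - pellForm a' Y' := by
  have h : pellForm a Y - pellForm a' Y' =
      (a - a') * ((a + a') * Y ^ 2) + (Y - Y') * ((a' ^ 2 - 1) * (Y + Y')) := by
    unfold pellForm
    ring
  rw [h]
  exact dvd_add (ha.mul_right _) (hY.mul_right _)

end PellForm

section PellSequences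

open Pell

theorem pellForm_yn {a : ℕ} (a1 : 1 < a) (n : ℕ) :
    pellForm (a : ℤ) (yn a1 n) = (xn a1 n : ℤ) ^ 2 := by
  have h := pell_eqz a1 n
  rw [dz_val a1] at h
  simp only [xz, yz, az] at h
  unfold pellForm
  linarith

theorem exists_abs_eq_yn {a : ℕ} (a1 : 1 < a) {Y : ℤ} (h : IsSquare (pellForm (a : ℤ) Y)) :
    ∃ n, |Y| = yn a1 n := by
  obtain ⟨X, hX⟩ := h
  have hcast : ((a * a - 1 : ℕ) : ℤ) = a ^ 2 - 1 := by
    rw [Nat.cast_sub (by nlinarith)]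
    push_cast
    ring
  have hnat : X.natAbs * X.natAbs = (a * a - 1) * Y.natAbs * Y.natAbs + 1 := by
    zify
    rw [abs_mul_abs_self, mul_assoc, abs_mul_abs_self, ← hX, hcast, pellForm]
    ring
  have hpell : X.natAbs * X.natAbs - (a * a - 1) * Y.natAbs * Y.natAbs = 1 := by omega
  obtain ⟨n, -, hn⟩ := eq_pell a1 hpell
  exact ⟨n, by rw [Int.abs_eq_natAbs, hn]⟩

theorem pellForm_eq_xn_sq {a : ℕ} (a1 : 1 < a) {Y : ℤ} {n : ℕ} (hY : |Y| = yn a1 n) :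
    pellForm (a : ℤ) Y = (xn a1 n : ℤ) ^ 2 := by
  rw [← pellForm_yn, ← hY, pellForm, pellForm, sq_abs]

theorem xn_two_mul {a : ℕ} (a1 : 1 < a) (n : ℕ) :
    (xn a1 (2 * n) : ℤ) = 2 * (xn a1 n : ℤ) ^ 2 - 1 := by
  have h := pell_eqz a1 n
  simp only [xz, yz] at h
  rw [two_mul, xn_add a1 n n]
  push_cast
  linarith

theorem yn_two_mul {a : ℕ} (a1 : 1 < a) (n : ℕ) : yn a1 (2 * n) = 2 * xn a1 n * yn a1 n := by
  rw [two_mul, yn_add]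
  ring

theorem sub_one_dvd_yn_sub {a : ℕ} (a1 : 1 < a) (n : ℕ) : (a : ℤ) - 1 ∣ yn a1 n - n := by
  have h := Nat.modEq_iff_dvd.1 (yn_modEq_a_sub_one a1 n).symm
  rwa [Nat.cast_sub a1.le, Nat.cast_one] at h

theorem dvd_yn_sub_yn {a b : ℕ} (a1 : 1 < a) (b1 : 1 < b) {m : ℤ} (h : m ∣ (a : ℤ) - b) (n : ℕ) :
    m ∣ (yn a1 n : ℤ) - yn b1 n := by
  have hab : b ≡ a [MOD m.natAbs] := Nat.modEq_iff_dvd.2 (Int.natAbs_dvd.2 h)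
  exact Int.natAbs_dvd.1 (Nat.modEq_iff_dvd.1 (xy_modEq_of_modEq b1 a1 hab n).2)

/-- Doubling the indices turns `xn²` into `xn`, so the step-down lemma for `xn` applies. -/
theorem dvd_sub_or_dvd_add_of_dvd_xn_sq_sub {a : ℕ} (a1 : 1 < a) {i j m : ℕ} (hi : 0 < i)
    (him : 2 * i ≤ m) (h : (xn a1 m : ℤ) ∣ (xn a1 j : ℤ) ^ 2 - (xn a1 i : ℤ) ^ 2) :
    (2 * m : ℤ) ∣ j - i ∨ (2 * m : ℤ) ∣ j + i := by
  have hmod : xn a1 (2 * j) ≡ xn a1 (2 * i) [MOD xn a1 m] := by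
    apply Nat.ModEq.symm
    rw [Nat.modEq_iff_dvd, xn_two_mul, xn_two_mul]
    obtain ⟨c, hc⟩ := h
    exact ⟨2 * c, by linear_combination 2 * hc⟩
  rcases modEq_of_xn_modEq a1 (by omega) him hmod with h | h
  · obtain ⟨c, hc⟩ := Nat.modEq_iff_dvd.1 h.symm
    exact Or.inl ⟨c, by push_cast at hc; linarith⟩
  · obtain ⟨c, hc⟩ := Nat.modEq_iff_dvd.1 h.symm
    exact Or.inr ⟨c, by push_cast at hc; linarith⟩

end PellSequences

theorem dvd_sub_or_dvd_add_trans {R : Type*} [CommRing R] {m x y z : R}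
    (hxy : m ∣ x - y ∨ m ∣ x + y) (hyz : m ∣ y - z ∨ m ∣ y + z) : m ∣ x - z ∨ m ∣ x + z := by
  rcases hxy with hxy | hxy <;> rcases hyz with hyz | hyz
  · exact Or.inl (by simpa using dvd_add hxy hyz)
  · exact Or.inr (by convert dvd_add hxy hyz using 1; ring)
  · exact Or.inr (by convert dvd_sub hxy hyz using 1; ring)
  · exact Or.inl (by convert dvd_sub hxy hyz using 1; ring)

theorem isSquare_of_isCoprime_mul {m n : ℤ} (h : IsCoprime m n) (hm : 0 < m)
    (hsq : IsSquare (m * n)) : IsSquare m := by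
  obtain ⟨r, hr⟩ := hsq
  obtain ⟨s, hs | hs⟩ := Int.sq_of_isCoprime h (hr.trans (sq r).symm)
  · exact ⟨s, hs.trans (sq s)⟩
  · nlinarith [sq_nonneg s]

theorem exists_isSquare_mul_sq_add_one {d M : ℤ} (hd : 0 < d) (hsq : ¬ IsSquare d) (hM : M ≠ 0) :
    ∃ v, v ≠ 0 ∧ IsSquare (d * (M * v) ^ 2 + 1) := by
  have hdM : ¬ IsSquare (d * M ^ 2) := by
    rintro ⟨r, hr⟩
    obtain ⟨c, rfl⟩ := (Int.pow_dvd_pow_iff two_ne_zero).1 (Dvd.intro_left _ (hr.trans (sq r).symm))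
    refine hsq ⟨c, mul_right_cancel₀ (pow_ne_zero 2 hM) ?_⟩
    rw [hr]
    ring
  obtain ⟨u, v, huv, hv⟩ := Pell.exists_of_not_isSquare (by positivity) hdM
  exact ⟨v, hv, u, by linarith⟩

/-- The data of a Diophantine description of `C = ψ_B(a)`, where `ψ` is the sequence of solutions
`Y` of the Pell equation `X² - (a² - 1) Y² = 1`: the parameters `a`, `B`, `C` and the unknowns
`x`, `y`. -/
structure PellSystem (R : Type*) where
  a : R
  B : R
  C : R
  x : R
  y : R

namespace PellSystem

section Polynomials

variable {R S : Type*} [CommRing R] [CommRing S]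

/-- The image of a system under a map of its entries. -/
@[simps]
def map (f : R → S) (p : PellSystem R) : PellSystem S := ⟨f p.a, f p.B, f p.C, f p.x, f p.y⟩

variable (p : PellSystem R)

/-- The form that is a square when `C` is a Pell solution `ψ_i(a)` up to sign. -/
def D : R := pellForm p.a p.C

/-- A multiple of `2 C² D`. -/
def E : R := 2 * p.C ^ 2 * p.D * p.x

/-- The form that is a square when `E` is a Pell solution `ψ_m(a)` up to sign. -/
def F : R := pellForm p.a p.E

/-- A second Pell parameter, congruent to `a` modulo `F` and to `1` modulo `2 C D`. -/
def G : R := 1 + 2 * p.C ^ 2 * p.D * p.F - (p.a - 1) * (p.F - 1)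

/-- The number congruent to `C` modulo `F` and to `B` modulo `2 C`. -/
def H : R := p.C + p.B * p.F + (2 * p.y - 1) * p.C * p.F

/-- The form that is a square when `H` is a Pell solution `ψ_j(G)` up to sign. -/
def I : R := pellForm p.G p.H

/-- Since `D`, `F`, `I` are positive and pairwise coprime, their product is a square exactly when
each of them is. -/
def product : R := p.D * p.F * p.I

theorem map_product (f : R →+* S) : (p.map f).product = f p.product := by
  simp [product, I, H, G, F, E, D, map_pellForm, map_ofNat]

theorem isCoprime_D_F : IsCoprime p.D p.F :=
  ⟨-((p.a ^ 2 - 1) * (2 * p.C ^ 2 * p.x) * p.E), 1, by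
    unfold F pellForm
    rw [E]
    ring⟩

theorem F_dvd_G_sub_a : p.F ∣ p.G - p.a :=
  ⟨2 * p.C ^ 2 * p.D - (p.a - 1), by unfold G; ring⟩

theorem F_dvd_H_sub_C : p.F ∣ p.H - p.C :=
  ⟨p.B + (2 * p.y - 1) * p.C, by unfold H; ring⟩

theorem F_dvd_I_sub_D : p.F ∣ p.I - p.D :=
  dvd_pellForm_sub_pellForm p.F_dvd_G_sub_a p.F_dvd_H_sub_C

theorem two_mul_C_mul_D_dvd_F_sub_one : 2 * p.C * p.D ∣ p.F - 1 :=
  ⟨(p.a ^ 2 - 1) * p.C * p.x * p.E, by unfold F pellForm; rw [E]; ring⟩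

theorem two_mul_C_dvd_F_sub_one : 2 * p.C ∣ p.F - 1 :=
  (Dvd.intro _ rfl).trans p.two_mul_C_mul_D_dvd_F_sub_one

theorem two_mul_C_mul_D_dvd_G_sub_one : 2 * p.C * p.D ∣ p.G - 1 := by
  have h : p.G - 1 = 2 * p.C * p.D * (p.C * p.F) - (p.F - 1) * (p.a - 1) := by
    unfold G
    ring
  rw [h]
  exact dvd_sub (Dvd.intro _ rfl) (p.two_mul_C_mul_D_dvd_F_sub_one.mul_right _)

theorem two_mul_C_dvd_G_sub_one : 2 * p.C ∣ p.G - 1 :=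
  (Dvd.intro _ rfl).trans p.two_mul_C_mul_D_dvd_G_sub_one

theorem two_mul_C_dvd_H_sub_B : 2 * p.C ∣ p.H - p.B := by
  have h : p.H - p.B = (p.F - 1) * (p.B + (2 * p.y - 1) * p.C) + 2 * p.C * p.y := by
    unfold H
    ring
  rw [h]
  exact dvd_add (p.two_mul_C_dvd_F_sub_one.mul_right _) (Dvd.intro _ rfl)

theorem isCoprime_F_I : IsCoprime p.F p.I := by
  obtain ⟨k, hk⟩ := p.F_dvd_I_sub_D
  rw [sub_eq_iff_eq_add'.1 hk]
  exact p.isCoprime_D_F.symm.add_mul_left_right k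

theorem isCoprime_D_I : IsCoprime p.D p.I := by
  obtain ⟨k, hk⟩ := p.two_mul_C_mul_D_dvd_G_sub_one
  refine ⟨-(2 * p.C * k * (p.G + 1) * p.H ^ 2), 1, ?_⟩
  unfold I pellForm
  linear_combination (p.G + 1) * p.H ^ 2 * hk

theorem isCoprime_F_two_mul_C : IsCoprime p.F (2 * p.C) := by
  obtain ⟨k, hk⟩ := p.two_mul_C_dvd_F_sub_one
  exact ⟨1, -k, by linear_combination hk⟩

end Polynomials

variable {p : PellSystem ℤ}

theorem two_le_G (ha : 1 ≤ p.a) (hC : p.C ≠ 0) : 2 ≤ p.G := by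
  have hC2 : 0 < p.C ^ 2 := by positivity
  have hF : 1 ≤ p.F := one_le_pellForm ha p.E
  have hD : p.a ^ 2 ≤ p.D := by
    unfold D pellForm
    linarith [mul_nonneg (by nlinarith : 0 ≤ p.a ^ 2 - 1) (by linarith : 0 ≤ p.C ^ 2 - 1)]
  have hCD : p.a ^ 2 ≤ p.C ^ 2 * p.D := by nlinarith
  have hCDF : p.a ^ 2 * p.F ≤ p.C ^ 2 * p.D * p.F := mul_le_mul_of_nonneg_right hCD (by linarith)
  have haF : 0 ≤ (p.a ^ 2 - p.a) * p.F := mul_nonneg (by nlinarith) (by linarith)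
  unfold G
  nlinarith

theorem one_le_I (ha : 1 ≤ p.a) : 1 ≤ p.I := by
  by_cases hC : p.C = 0
  · simp [I, H, G, F, E, D, pellForm, hC]
  · exact one_le_pellForm (by linarith [two_le_G ha hC]) p.H

theorem product_pos (ha : 1 ≤ p.a) : 0 < p.product := by
  have hD : 1 ≤ p.D := one_le_pellForm ha p.C
  have hF : 1 ≤ p.F := one_le_pellForm ha p.E
  have hI := one_le_I ha
  unfold product
  positivity

theorem isSquare_of_isSquare_product (ha : 1 ≤ p.a) (h : IsSquare p.product) :
    IsSquare p.D ∧ IsSquare p.F ∧ IsSquare p.I := by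
  have hD : 0 < p.D := one_le_pellForm ha p.C
  have hF : 0 < p.F := one_le_pellForm ha p.E
  have hI : 0 < p.I := one_le_I ha
  have hDF : IsSquare (p.D * p.F) :=
    isSquare_of_isCoprime_mul (p.isCoprime_D_I.mul_left p.isCoprime_F_I) (by positivity) h
  refine ⟨isSquare_of_isCoprime_mul p.isCoprime_D_F hD hDF,
    isSquare_of_isCoprime_mul p.isCoprime_D_F.symm hF (by rwa [mul_comm]),
    isSquare_of_isCoprime_mul (p.isCoprime_D_I.mul_left p.isCoprime_F_I).symm hI ?_⟩
  rwa [mul_comm]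

open Pell

variable {a : ℕ} (a1 : 1 < a)

section Sufficiency

theorem C_ne_zero {B : ℕ} (hpB : p.B = B) (hB : 0 < B) (hBa : (B : ℤ) < p.a - 1)
    (hC : p.a - 1 ∣ p.C - p.B) : p.C ≠ 0 := by
  intro h0
  rw [h0, zero_sub, dvd_neg, hpB] at hC
  have := Int.le_of_dvd (by exact_mod_cast hB) hC
  omega

theorem yn_eq_of_abs_E_eq {i m : ℕ} (hpa : p.a = a) (hi : |p.C| = yn a1 i)
    (hm : |p.E| = yn a1 m) : yn a1 m = 2 * yn a1 i ^ 2 * xn a1 i ^ 2 * p.x.natAbs := by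
  have hD : p.D = (xn a1 i : ℤ) ^ 2 := by
    rw [D, hpa, pellForm_eq_xn_sq a1 hi]
  zify
  rw [← hm, ← hi, ← hD, sq_abs, E, abs_mul, abs_of_nonneg]
  rw [hD]
  positivity

theorem two_mul_le_of_abs_E_eq {i m : ℕ} (hpa : p.a = a) (hx : p.x ≠ 0) (hi : |p.C| = yn a1 i)
    (hm : |p.E| = yn a1 m) : 2 * i ≤ m := by
  apply (strictMono_y a1).le_iff_le.1
  have hx1 : 1 ≤ p.x.natAbs := Int.natAbs_pos.2 hx
  rw [yn_two_mul, yn_eq_of_abs_E_eq a1 hpa hi hm]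
  calc 2 * xn a1 i * yn a1 i = 2 * yn a1 i * xn a1 i * 1 := by ring
    _ ≤ 2 * yn a1 i ^ 2 * xn a1 i ^ 2 * p.x.natAbs := by
      gcongr <;> exact Nat.le_self_pow two_ne_zero _

/-- `j` and `i` are the indices of `H = ψ_j(G)` and `C = ψ_i(a)`; modulo `F = χ_m(a)²` one may
replace `ψ_j(G)` by `ψ_j(a)`. -/
theorem two_mul_C_dvd_sub_or_dvd_add {G i m j : ℕ} (G1 : 1 < G) (hpa : p.a = a) (hpG : p.G = G)
    (hx : p.x ≠ 0) (hi0 : 0 < i) (hi : |p.C| = yn a1 i) (hm : |p.E| = yn a1 m)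
    (hj : |p.H| = yn G1 j) : 2 * p.C ∣ j - i ∨ 2 * p.C ∣ (j : ℤ) + i := by
  have hF : p.F = (xn a1 m : ℤ) ^ 2 := by rw [F, hpa, pellForm_eq_xn_sq a1 hm]
  have hD : p.D = (xn a1 i : ℤ) ^ 2 := by rw [D, hpa, pellForm_eq_xn_sq a1 hi]
  have hI : p.I = (xn G1 j : ℤ) ^ 2 := by rw [I, hpG, pellForm_eq_xn_sq G1 hj]
  have hxF : (xn a1 m : ℤ) ∣ p.F := hF ▸ dvd_pow_self _ two_ne_zero
  have hGa : (xn a1 m : ℤ) ∣ G - a := by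
    rw [← hpG, ← hpa]
    exact hxF.trans p.F_dvd_G_sub_a
  have hII : (xn a1 m : ℤ) ∣ (xn G1 j : ℤ) ^ 2 - (xn a1 j : ℤ) ^ 2 := by
    rw [← pellForm_yn, ← pellForm_yn]
    exact dvd_pellForm_sub_pellForm hGa (dvd_yn_sub_yn G1 a1 hGa j)
  have hID : (xn a1 m : ℤ) ∣ (xn G1 j : ℤ) ^ 2 - (xn a1 i : ℤ) ^ 2 := by
    rw [← hI, ← hD]
    exact hxF.trans p.F_dvd_I_sub_D
  have hji : (xn a1 m : ℤ) ∣ (xn a1 j : ℤ) ^ 2 - (xn a1 i : ℤ) ^ 2 := by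
    simpa using dvd_sub hID hII
  have hym : yn a1 i ∣ m := by
    apply dvd_of_ysq_dvd a1
    rw [yn_eq_of_abs_E_eq a1 hpa hi hm]
    exact ⟨2 * xn a1 i ^ 2 * p.x.natAbs, by ring⟩
  have hCm : 2 * p.C ∣ 2 * m := by
    refine mul_dvd_mul_left 2 ((abs_dvd _ _).1 ?_)
    rw [hi]
    exact_mod_cast hym
  exact (dvd_sub_or_dvd_add_of_dvd_xn_sq_sub a1 hi0 (two_mul_le_of_abs_E_eq a1 hpa hx hi hm)
    hji).imp hCm.trans hCm.trans

theorem two_mul_C_dvd_sub_B_or_dvd_add_B {G j : ℕ} (G1 : 1 < G) (hpG : p.G = G)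
    (hj : |p.H| = yn G1 j) : 2 * p.C ∣ j - p.B ∨ 2 * p.C ∣ j + p.B := by
  have hjH : 2 * p.C ∣ |p.H| - j := by
    rw [hj]
    exact (hpG ▸ p.two_mul_C_dvd_G_sub_one).trans (sub_one_dvd_yn_sub G1 j)
  refine dvd_sub_or_dvd_add_trans (y := p.H) ?_ (Or.inl p.two_mul_C_dvd_H_sub_B)
  rcases abs_choice p.H with h | h <;> rw [h] at hjH
  · exact Or.inl ((dvd_sub_comm).1 hjH)
  · exact Or.inr (by convert hjH.neg_right using 1; ring)

theorem le_abs_C_of_dvd {B : ℕ} (hpB : p.B = B) (hBa : 2 * (B : ℤ) < p.a - 1)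
    (hC : p.a - 1 ∣ p.C - p.B) : B ≤ |p.C| := by
  rcases eq_or_ne p.C p.B with h | h
  · rw [h, hpB, Nat.abs_cast]
  · have hle := Int.le_of_dvd (abs_pos.2 (sub_ne_zero.2 h)) ((dvd_abs _ _).2 hC)
    have := abs_sub p.C p.B
    rw [hpB, Nat.abs_cast] at this
    rw [hpB] at hle
    linarith

theorem eq_of_two_mul_dvd_sub_or_add {C : ℤ} {i B : ℕ} (hi0 : 0 < i) (hi : i ≤ |C|) (hB : B ≤ |C|)
    (h : 2 * C ∣ i - B ∨ 2 * C ∣ (i : ℤ) + B) : i = B := by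
  have hC : |2 * C| = 2 * |C| := by rw [abs_mul, abs_two]
  rcases h with h | h
  · have hlt : |(i : ℤ) - B| < |2 * C| := by
      rw [hC, abs_lt]
      constructor <;> omega
    have := Int.eq_zero_of_abs_lt_dvd ((abs_dvd _ _).2 h) hlt
    omega
  · have := Int.le_of_dvd (by omega) ((abs_dvd _ _).2 h)
    omega

theorem C_eq_of_abs_C_eq {B : ℕ} (hpa : p.a = a) (hpB : p.B = B) (hB : 0 < B)
    (hBa : 2 * (B : ℤ) < p.a - 1) (hC : p.a - 1 ∣ p.C - p.B) (habs : |p.C| = yn a1 B) :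
    p.C = yn a1 B := by
  rcases abs_choice p.C with h | h
  · rw [← habs, h]
  · exfalso
    have hsub := dvd_add (hpa ▸ sub_one_dvd_yn_sub a1 B) hC
    rw [← habs, h, hpB, hpa] at hsub
    have h2B : (a : ℤ) - 1 ∣ 2 * B := by
      rw [← dvd_neg]
      convert hsub using 1
      ring
    have := Int.le_of_dvd (by omega) h2B
    omega

theorem C_eq_yn_of_isSquare_product {B : ℕ} (hpa : p.a = a) (hpB : p.B = B) (hB : 0 < B)
    (hBa : 2 * (B : ℤ) < p.a - 1) (hC : p.a - 1 ∣ p.C - p.B) (hx : p.x ≠ 0)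
    (h : IsSquare p.product) : p.C = yn a1 B := by
  have ha : 1 ≤ p.a := by omega
  have hC0 : p.C ≠ 0 := C_ne_zero hpB hB (by omega) hC
  obtain ⟨hD, hF, hI⟩ := isSquare_of_isSquare_product ha h
  have hG := two_le_G ha hC0
  lift p.G to ℕ using by linarith with G hpG
  have G1 : 1 < G := by omega
  rw [D, hpa] at hD
  rw [F, hpa] at hF
  rw [I, ← hpG] at hI
  obtain ⟨i, hi⟩ := exists_abs_eq_yn a1 hD
  obtain ⟨m, hm⟩ := exists_abs_eq_yn a1 hF
  obtain ⟨j, hj⟩ := exists_abs_eq_yn G1 hI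
  have hi0 : 0 < i := by
    rw [Nat.pos_iff_ne_zero]
    rintro rfl
    exact hC0 (abs_eq_zero.1 (by simpa using hi))
  have hij := two_mul_C_dvd_sub_or_dvd_add a1 G1 hpa hpG.symm hx hi0 hi hm hj
  have hjB := two_mul_C_dvd_sub_B_or_dvd_add_B G1 hpG.symm hj
  have hiB := dvd_sub_or_dvd_add_trans (hij.imp (dvd_sub_comm).1 fun h ↦ by rwa [add_comm]) hjB
  rw [hpB] at hiB
  obtain rfl := eq_of_two_mul_dvd_sub_or_add hi0 (by rw [hi]; exact_mod_cast yn_ge_n a1 i)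
    (le_abs_C_of_dvd hpB hBa hC) hiB
  exact C_eq_of_abs_C_eq a1 hpa hpB hB hBa hC hi

end Sufficiency

section Necessity

theorem not_isSquare_sq_sub_one {n : ℤ} (hn : 2 ≤ n) : ¬ IsSquare (n ^ 2 - 1) := by
  rintro ⟨r, hr⟩
  have hdvd : n + |r| ∣ 1 := ⟨n - |r|, by linear_combination -hr + abs_mul_abs_self r⟩
  have hle := Int.le_of_dvd one_pos hdvd
  linarith [abs_nonneg r]

theorem exists_H_eq_yn {a B C x : ℤ} {G i : ℕ} (G1 : 1 < G)
    (hG : (⟨a, B, C, x, 0⟩ : PellSystem ℤ).G = G) (hi : B = i)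
    (hC : (⟨a, B, C, x, 0⟩ : PellSystem ℤ).F ∣ yn G1 i - C) :
    ∃ y, (⟨a, B, C, x, y⟩ : PellSystem ℤ).H = yn G1 i := by
  set p : PellSystem ℤ := ⟨a, B, C, x, 0⟩
  have hCB : 2 * C ∣ yn G1 i - B := by
    rw [hi]
    exact (hG ▸ p.two_mul_C_dvd_G_sub_one).trans (sub_one_dvd_yn_sub G1 i)
  have hF : p.F ∣ yn G1 i - C - (B - C) * p.F := dvd_sub hC (Dvd.intro_left _ rfl)
  have h2C : 2 * C ∣ yn G1 i - C - (B - C) * p.F := by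
    have h : yn G1 i - C - (B - C) * p.F = (yn G1 i - B) - (B - C) * (p.F - 1) := by ring
    rw [h]
    exact dvd_sub hCB (p.two_mul_C_dvd_F_sub_one.mul_left _)
  obtain ⟨y, hy⟩ := p.isCoprime_F_two_mul_C.mul_dvd hF h2C
  refine ⟨y, ?_⟩
  have hH : (⟨a, B, C, x, y⟩ : PellSystem ℤ).H = C + B * p.F + (2 * y - 1) * C * p.F := rfl
  rw [hH]
  linear_combination -hy

theorem exists_isSquare_product {B : ℕ} (hB : 0 < B) :
    ∃ x y : ℤ, x ≠ 0 ∧ IsSquare (⟨a, B, yn a1 B, x, y⟩ : PellSystem ℤ).product := by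
  have ha : (1 : ℤ) ≤ a := by exact_mod_cast a1.le
  have hC : (yn a1 B : ℤ) ≠ 0 := by
    have := yn_ge_n a1 B
    omega
  have hM : 2 * (yn a1 B : ℤ) ^ 2 * pellForm (a : ℤ) (yn a1 B) ≠ 0 := by
    have := one_le_pellForm ha (yn a1 B)
    positivity
  have ha2 : (2 : ℤ) ≤ a := by exact_mod_cast a1
  obtain ⟨x, hx, hF⟩ := exists_isSquare_mul_sq_add_one (d := (a : ℤ) ^ 2 - 1) (by nlinarith)
    (not_isSquare_sq_sub_one ha2) hM
  set p : PellSystem ℤ := ⟨a, B, yn a1 B, x, 0⟩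
  have hG := two_le_G (p := p) ha hC
  obtain ⟨G, hpG⟩ := Int.eq_ofNat_of_zero_le (by linarith : 0 ≤ p.G)
  have G1 : 1 < G := by omega
  have hGC : p.F ∣ yn G1 B - yn a1 B :=
    dvd_yn_sub_yn G1 a1 (hpG ▸ p.F_dvd_G_sub_a) B
  obtain ⟨y, hy⟩ := exists_H_eq_yn G1 hpG rfl hGC
  refine ⟨x, y, hx, (IsSquare.mul ?_ hF).mul ?_⟩
  · exact ⟨xn a1 B, (pellForm_yn a1 B).trans (sq _)⟩
  · have hI : (⟨a, B, yn a1 B, x, y⟩ : PellSystem ℤ).I = pellForm (G : ℤ) (yn G1 B) := by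
      rw [← hpG, ← hy]
      rfl
    exact hI ▸ ⟨xn G1 B, (pellForm_yn G1 B).trans (sq _)⟩

end Necessity

end PellSystem

/-! ### Binary digits -/

section BinaryDigits

/-- The number of ones in the binary expansion of `n`. -/
def bitCount (n : ℕ) : ℕ := (Nat.digits 2 n).sum

theorem bitCount_eq_mod_add_div (n : ℕ) : bitCount n = n % 2 + bitCount (n / 2) := by
  rcases Nat.eq_zero_or_pos n with rfl | hn
  · rfl
  · unfold bitCount
    rw [Nat.digits_def' one_lt_two hn, List.sum_cons]

theorem bitCount_two_mul (n : ℕ) : bitCount (2 * n) = bitCount n := by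
  rw [bitCount_eq_mod_add_div]
  simp

theorem bitCount_two_mul_add_one (n : ℕ) : bitCount (2 * n + 1) = bitCount n + 1 := by
  rw [bitCount_eq_mod_add_div, Nat.mul_add_mod, Nat.mul_add_div two_pos, add_comm]
  rfl

theorem bitCount_succ_le (n : ℕ) : bitCount (n + 1) ≤ bitCount n + 1 := by
  induction n using Nat.strong_induction_on with
  | _ n ih =>
    obtain ⟨k, rfl | rfl⟩ := Nat.even_or_odd' n
    · rw [bitCount_two_mul_add_one, bitCount_two_mul]
    · have := ih k (by omega)
      rw [show 2 * k + 1 + 1 = 2 * (k + 1) by ring, bitCount_two_mul, bitCount_two_mul_add_one]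
      omega

theorem and_eq_zero_iff_div_two (S T : ℕ) :
    S &&& T = 0 ↔ S / 2 &&& T / 2 = 0 ∧ ¬ (S % 2 = 1 ∧ T % 2 = 1) := by
  have hdiv : (S &&& T) / 2 = S / 2 &&& T / 2 := Nat.and_div_two
  have hmod := Nat.and_mod_two_eq_one (a := S) (b := T)
  rw [← hdiv, ← hmod]
  omega

/-- There is a carry in the binary addition of `S` and `T` unless `S` and `T` have disjoint sets of
ones, and every carry decreases the number of ones. -/
theorem bitCount_add (S T : ℕ) : bitCount (S + T) ≤ bitCount S + bitCount T ∧
    (bitCount (S + T) = bitCount S + bitCount T ↔ S &&& T = 0) := by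
  induction S using Nat.strong_induction_on generalizing T with
  | _ S ih =>
    rcases Nat.eq_zero_or_pos S with rfl | hS
    · simp [bitCount]
    obtain ⟨hle, heq⟩ := ih (S / 2) (by omega) (T / 2)
    rw [and_eq_zero_iff_div_two, ← heq, bitCount_eq_mod_add_div S, bitCount_eq_mod_add_div T,
      bitCount_eq_mod_add_div (S + T)]
    by_cases hcarry : S % 2 = 1 ∧ T % 2 = 1
    · have := bitCount_succ_le (S / 2 + T / 2)
      rw [show (S + T) / 2 = S / 2 + T / 2 + 1 by omega]
      omega
    · rw [show (S + T) / 2 = S / 2 + T / 2 by omega]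
      omega

theorem bitCount_add_two_pow_mul {k x : ℕ} (hx : x < 2 ^ k) (y : ℕ) :
    bitCount (x + 2 ^ k * y) = bitCount x + bitCount y := by
  induction k generalizing x with
  | zero =>
    obtain rfl : x = 0 := by omega
    simp [bitCount]
  | succ k ih =>
    have hpow : 2 ^ (k + 1) * y = 2 * (2 ^ k * y) := by ring
    rw [bitCount_eq_mod_add_div, bitCount_eq_mod_add_div x, hpow, Nat.add_mul_mod_self_left,
      Nat.add_mul_div_left _ _ two_pos, ih (by rw [pow_succ] at hx; omega), add_assoc]

theorem bitCount_two_pow_sub_one_sub {k x : ℕ} (hx : x < 2 ^ k) :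
    bitCount (2 ^ k - 1 - x) + bitCount x = k := by
  induction k generalizing x with
  | zero =>
    obtain rfl : x = 0 := by omega
    simp [bitCount]
  | succ k ih =>
    rw [pow_succ] at hx ⊢
    have := ih (x := x / 2) (by omega)
    rw [bitCount_eq_mod_add_div, bitCount_eq_mod_add_div x,
      show (2 ^ k * 2 - 1 - x) / 2 = 2 ^ k - 1 - x / 2 by omega]
    omega

theorem two_pow_dvd_centralBinom_iff (m X : ℕ) : 2 ^ m ∣ X.centralBinom ↔ m ≤ bitCount X := by
  have hprime : Fact (Nat.Prime 2) := ⟨Nat.prime_two⟩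
  have h := sub_one_mul_padicValNat_choose_eq_sub_sum_digits (p := 2) (k := X) (n := 2 * X)
    (by omega)
  rw [show 2 * X - X = X by omega] at h
  change (2 - 1) * _ = bitCount X + bitCount X - bitCount (2 * X) at h
  rw [bitCount_two_mul, ← Nat.centralBinom_eq_two_mul_choose] at h
  rw [show bitCount X = padicValNat 2 X.centralBinom by omega]
  exact padicValNat_dvd_iff_le X.centralBinom_ne_zero

/-- Read in base `2N` with `N` a power of two, the number has the digits `N - 1 - S`, `N - 1 - T`
and `S + T`, which together have at most `2 log₂ N` ones. -/
def maskCode {R : Type*} [CommRing R] (N S T : R) : R :=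
  N - 1 - S + 2 * N * (N - 1 - T + 2 * N * (S + T))

theorem map_maskCode {R R' : Type*} [CommRing R] [CommRing R'] (f : R →+* R') (N S T : R) :
    f (maskCode N S T) = maskCode (f N) (f S) (f T) := by
  simp only [maskCode, map_add, map_sub, map_mul, map_one, map_ofNat]

theorem le_maskCode {N S T : ℤ} (hS0 : 0 ≤ S) (hS : S < N) (hT0 : 0 ≤ T) (hT : T < N) :
    T ≤ maskCode N S T := by
  have : T * 1 ≤ (S + T) * N ^ 2 := by
    gcongr
    · linarith
    · nlinarith
  unfold maskCode
  nlinarith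

theorem exists_maskCode_eq {k S T : ℕ} (hS : S < 2 ^ k) (hT : T < 2 ^ k) :
    ∃ P : ℕ, maskCode (2 ^ k : ℤ) S T = P ∧ P < 2 ^ (3 * (k + 1)) ∧
      bitCount P ≤ 2 * k ∧ (bitCount P = 2 * k ↔ S &&& T = 0) := by
  have hpow : 2 ^ (k + 1) = 2 * 2 ^ k := pow_succ' 2 k
  refine ⟨2 ^ k - 1 - S + 2 ^ (k + 1) * (2 ^ k - 1 - T + 2 ^ (k + 1) * (S + T)), ?_, ?_, ?_⟩
  · rw [hpow, Nat.sub_sub, Nat.sub_sub]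
    push_cast [Nat.cast_sub (by omega : 1 + S ≤ 2 ^ k), Nat.cast_sub (by omega : 1 + T ≤ 2 ^ k)]
    unfold maskCode
    ring
  · rw [mul_comm 3, pow_mul]
    set N := 2 ^ (k + 1)
    calc _ < N + N * (2 ^ k - 1 - T + N * (S + T)) := by omega
      _ = N * (2 ^ k - T + N * (S + T)) := by
        rw [← mul_one_add]
        congr 1
        omega
      _ ≤ N * (N + N * (N - 1)) := by
        gcongr <;> omega
      _ = N ^ 3 := by
        rw [← mul_one_add, add_tsub_cancel_of_le (by omega)]
        ring
  · rw [bitCount_add_two_pow_mul (by omega), bitCount_add_two_pow_mul (by omega)]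
    have hSc := bitCount_two_pow_sub_one_sub hS
    have hTc := bitCount_two_pow_sub_one_sub hT
    obtain ⟨hle, heq⟩ := bitCount_add S T
    rw [← heq]
    omega

theorem exists_maskCode_add_maskCode_eq {k S₁ T₁ S₂ T₂ : ℕ} (hS₁ : S₁ < 2 ^ k) (hT₁ : T₁ < 2 ^ k)
    (hS₂ : S₂ < 2 ^ k) (hT₂ : T₂ < 2 ^ k) :
    ∃ X : ℕ, maskCode (2 ^ k : ℤ) S₁ T₁ + (2 * 2 ^ k) ^ 3 * maskCode (2 ^ k : ℤ) S₂ T₂ = X ∧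
      ((2 ^ k) ^ 4 ∣ X.centralBinom ↔ S₁ &&& T₁ = 0 ∧ S₂ &&& T₂ = 0) := by
  obtain ⟨P₁, hP₁, hlt, hle₁, heq₁⟩ := exists_maskCode_eq hS₁ hT₁
  obtain ⟨P₂, hP₂, -, hle₂, heq₂⟩ := exists_maskCode_eq hS₂ hT₂
  refine ⟨P₁ + 2 ^ (3 * (k + 1)) * P₂, ?_, ?_⟩
  · rw [hP₁, hP₂]
    push_cast
    ring
  · rw [← pow_mul, two_pow_dvd_centralBinom_iff, bitCount_add_two_pow_mul hlt, ← heq₁, ← heq₂]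
    omega

theorem and_two_pow_sub_one_mul_two_pow_eq_zero_iff (q t K : ℕ) :
    K &&& ((2 ^ q - 1) * 2 ^ t) = 0 ↔ K / 2 ^ t % 2 ^ q = 0 := by
  have hdiv : K &&& ((2 ^ q - 1) * 2 ^ t) = K / 2 ^ t % 2 ^ q * 2 ^ t := by
    apply Nat.eq_of_testBit_eq
    intro i
    rw [Nat.testBit_and, Nat.testBit_mul_two_pow, Nat.testBit_mul_two_pow, Nat.testBit_mod_two_pow,
      Nat.testBit_two_pow_sub_one, Nat.testBit_div_two_pow]
    by_cases hi : t ≤ i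
    · simp [hi, Bool.and_comm]
    · simp [hi]
  simp [hdiv]

theorem eq_zero_iff_forall_testBit_eq_false {n : ℕ} : n = 0 ↔ ∀ i, n.testBit i = false :=
  ⟨by rintro rfl; exact Nat.zero_testBit, fun h ↦ Nat.eq_of_testBit_eq (by simpa using h)⟩

/-- Every one in the binary expansion of `g` is a one of `m`. -/
def IsSubmask (g m : ℕ) : Prop := ∀ i, g.testBit i = true → m.testBit i = true

theorem and_two_pow_sub_one_sub_eq_zero_iff {k g m : ℕ} (hg : g < 2 ^ k) (hm : m < 2 ^ k) :
    g &&& (2 ^ k - 1 - m) = 0 ↔ IsSubmask g m := by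
  rw [eq_zero_iff_forall_testBit_eq_false]
  refine forall_congr' fun i ↦ ?_
  have hcompl : (2 ^ k - 1 - m).testBit i = (decide (i < k) && !m.testBit i) := by
    rw [← Nat.testBit_two_pow_sub_succ hm, Nat.sub_sub, add_comm 1 m]
  rw [Nat.testBit_and, hcompl]
  by_cases hik : i < k
  · simp [hik]
  · simp [hik, Nat.testBit_lt_two_pow (hg.trans_le (Nat.pow_le_pow_right two_pos (not_lt.1 hik)))]

theorem isSubmask_two_pow_mul_add_iff {t p A g : ℕ} (hA : A < 2 ^ t) :
    IsSubmask g (2 ^ t * (2 ^ p - 1) + A) ↔ IsSubmask (g % 2 ^ t) A ∧ g / 2 ^ t < 2 ^ p := by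
  have hbit (i : ℕ) : (2 ^ t * (2 ^ p - 1) + A).testBit i =
      if i < t then A.testBit i else decide (i - t < p) := by
    rw [Nat.testBit_two_pow_mul_add _ hA, Nat.testBit_two_pow_sub_one]
  constructor
  · refine fun h ↦ ⟨fun i hi ↦ ?_, Nat.lt_pow_two_of_testBit _ fun i hi ↦ ?_⟩
    · rw [Nat.testBit_mod_two_pow, Bool.and_eq_true, decide_eq_true_eq] at hi
      simpa only [hbit, if_pos hi.1] using h i hi.2
    · rw [Nat.testBit_div_two_pow, Bool.eq_false_iff]
      intro hg
      have := h _ hg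
      rw [hbit, if_neg (by omega), decide_eq_true_eq] at this
      omega
  · rintro ⟨hlow, hhigh⟩ i hi
    rw [hbit]
    split_ifs with hit
    · exact hlow i (by simp [Nat.testBit_mod_two_pow, hit, hi])
    · rw [decide_eq_true_eq]
      by_contra hp
      have := Nat.testBit_lt_two_pow (hhigh.trans_le (Nat.pow_le_pow_right two_pos (not_lt.1 hp)))
      rw [Nat.testBit_div_two_pow, Nat.sub_add_cancel (not_lt.1 hit), hi] at this
      contradiction

theorem sum_mul_pow_lt {R : Type*} [CommSemiring R] [LinearOrder R] [IsStrictOrderedRing R] {n : ℕ}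
    {e : ℕ → ℕ} (he : StrictMono e) {β : R} {z : Fin n → R} (hz0 : ∀ i, 0 ≤ z i)
    (hz : ∀ i, z i + 1 ≤ β) (hβ : 1 ≤ β) : ∑ i : Fin n, z i * β ^ e i < β ^ e n := by
  have hβ0 : 0 < β := one_pos.trans_le hβ
  induction n with
  | zero => simpa using pow_pos hβ0 _
  | succ n ih =>
    rw [Fin.sum_univ_castSucc]
    calc _ < β ^ e n + z (Fin.last n) * β ^ e n :=
          add_lt_add_left (ih (fun i ↦ hz0 _) fun i ↦ hz _) _
      _ = (z (Fin.last n) + 1) * β ^ e n := by ring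
      _ ≤ β * β ^ e n := by
        gcongr
        exact hz _
      _ = β ^ (e n + 1) := (pow_succ' _ _).symm
      _ ≤ _ := pow_le_pow_right₀ hβ (he n.lt_succ_self)

theorem isSubmask_sum_iff {p q : ℕ} (hpq : p ≤ q) {e : ℕ → ℕ} (he : StrictMono e) (n g : ℕ) :
    IsSubmask g (∑ i : Fin n, (2 ^ p - 1) * (2 ^ q) ^ e i) ↔
      ∃ z : Fin n → ℕ, (∀ i, z i < 2 ^ p) ∧ g = ∑ i, z i * (2 ^ q) ^ e i := by
  induction n generalizing g with
  | zero =>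
    have hg : IsSubmask g 0 ↔ g = 0 := by simp [IsSubmask, eq_zero_iff_forall_testBit_eq_false]
    simp [hg]
  | succ n ih =>
    have hp : 2 ^ p - 1 < 2 ^ p := Nat.sub_lt (by positivity) one_pos
    have hsplit (z : Fin (n + 1) → ℕ) : ∑ i, z i * (2 ^ q) ^ e i =
        2 ^ (q * e n) * z (Fin.last n) + ∑ i : Fin n, z i.castSucc * (2 ^ q) ^ e i := by
      rw [Fin.sum_univ_castSucc, add_comm, pow_mul, mul_comm (z _)]
      rfl
    have hlt {z : Fin n → ℕ} (hz : ∀ i, z i < 2 ^ p) :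
        ∑ i, z i * (2 ^ q) ^ e i < 2 ^ (q * e n) :=
      (sum_mul_pow_lt he (fun _ ↦ Nat.zero_le _)
        (fun i ↦ (hz i).trans_le (Nat.pow_le_pow_right two_pos hpq))
        Nat.one_le_two_pow).trans_eq (pow_mul _ _ _).symm
    rw [hsplit fun _ ↦ 2 ^ p - 1, isSubmask_two_pow_mul_add_iff (hlt fun _ ↦ hp), ih]
    constructor
    · rintro ⟨⟨z, hz, hlow⟩, hhigh⟩
      refine ⟨Fin.snoc z (g / 2 ^ (q * e n)), fun i ↦ ?_, ?_⟩
      · induction i using Fin.lastCases with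
        | last => rwa [Fin.snoc_last]
        | cast i => simpa only [Fin.snoc_castSucc] using hz i
      · simp only [hsplit, Fin.snoc_last, Fin.snoc_castSucc]
        rw [← hlow, Nat.div_add_mod]
    · rintro ⟨z, hz, rfl⟩
      have hlow := hlt fun i : Fin n ↦ hz i.castSucc
      rw [hsplit]
      refine ⟨⟨fun i ↦ z i.castSucc, fun i ↦ hz _, ?_⟩, ?_⟩
      · rw [Nat.mul_add_mod, Nat.mod_eq_of_lt hlow]
      · rw [Nat.mul_add_div (by positivity), Nat.div_eq_of_lt hlow, add_zero]
        exact hz _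

end BinaryDigits

/-! ### Growth of Pell sequences and central binomial coefficients -/

section PellGrowth

open Pell

theorem yn_succ_le_pow {a : ℕ} (a1 : 1 < a) (n : ℕ) : yn a1 (n + 1) ≤ (2 * a) ^ n := by
  induction n with
  | zero => simp
  | succ n ih =>
    have := yn_succ_succ a1 n
    rw [pow_succ]
    nlinarith

theorem pow_le_yn_succ {a : ℕ} (a1 : 1 < a) (n : ℕ) :
    (2 * (a : ℤ) - 1) ^ n ≤ yn a1 (n + 1) := by
  induction n with
  | zero => simp
  | succ n ih =>
    have hrec : (yn a1 (n + 2) : ℤ) + yn a1 n = 2 * a * yn a1 (n + 1) := by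
      exact_mod_cast yn_succ_succ a1 n
    have hmono : (yn a1 n : ℤ) ≤ yn a1 (n + 1) := by
      exact_mod_cast (strictMono_y a1).monotone n.le_succ
    rw [pow_succ]
    nlinarith

theorem four_mul_sub_five_dvd {a : ℕ} (a1 : 1 < a) (n : ℕ) :
    4 * (a : ℤ) - 5 ∣ 3 * 2 ^ n * yn a1 n - 2 * ((2 ^ n) ^ 2 - 1) := by
  induction n using Nat.twoStepInduction with
  | zero => simp
  | one => simp
  | more n ih₀ ih₁ =>
    obtain ⟨c₀, h₀⟩ := ih₀
    obtain ⟨c₁, h₁⟩ := ih₁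
    have hrec : (yn a1 (n + 2) : ℤ) + yn a1 n = 2 * a * yn a1 (n + 1) := by
      exact_mod_cast yn_succ_succ a1 n
    refine ⟨3 * 2 ^ (n + 1) * yn a1 (n + 1) + 5 * c₁ - 4 * c₀, ?_⟩
    rw [pow_succ] at h₁ ⊢
    rw [pow_succ]
    linear_combination 3 * (2 ^ n * 2 * 2) * hrec + 5 * h₁ - 4 * h₀

theorem eq_yn_of_isSquare_pellForm {a : ℕ} (a1 : 1 < a) {n : ℕ} (hn : 0 < n) (hna : 3 * n < a)
    {K : ℤ} (hsq : IsSquare (pellForm (a : ℤ) K)) (hK : (a : ℤ) - 1 ∣ K - n)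
    (hlt : |K| < yn a1 (2 * n)) : K = yn a1 n := by
  obtain ⟨m, hm⟩ := exists_abs_eq_yn a1 hsq
  have hmn : m < 2 * n := (strictMono_y a1).lt_iff_lt.1 (by exact_mod_cast hm ▸ hlt)
  have hmod : (a : ℤ) - 1 ∣ |K| - m := hm ▸ sub_one_dvd_yn_sub a1 m
  rcases abs_choice K with h | h
  · have hdvd : (a : ℤ) - 1 ∣ m - n := by
      rw [h] at hmod
      simpa using dvd_sub hK hmod
    have hzero := Int.eq_zero_of_abs_lt_dvd hdvd (by rw [abs_lt]; constructor <;> omega)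
    rw [← h, hm, show m = n by omega]
  · exfalso
    have hdvd : (a : ℤ) - 1 ∣ m + n := by
      rw [h] at hmod
      have hneg : (m + n : ℤ) = -((K - n) + (-K - m)) := by ring
      rw [hneg]
      exact (dvd_add hK hmod).neg_right
    have := Int.le_of_dvd (by omega) hdvd
    omega

/-- The congruence `3 W ψ_n(a) ≡ 2 (W² - 1)` holds for `W = 2ⁿ`, and a second solution `W` would
make `(P - W) (1 + P W)` divisible by `4 a - 5`. -/
theorem eq_of_four_mul_sub_five_dvd {a P W C : ℤ} (hP : 2 ≤ P)
    (hWC : 4 * a - 5 ∣ 3 * W * C - 2 * (W ^ 2 - 1)) (hPC : 4 * a - 5 ∣ 3 * P * C - 2 * (P ^ 2 - 1))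
    (ha : 4 * P ^ 2 * (1 + W ^ 2) ^ 2 ≤ a) : W = P := by
  have hdvd : 4 * a - 5 ∣ (P - W) * (1 + P * W) := by
    have hodd : IsCoprime (4 * a - 5) 2 := ⟨1, -2 * a + 3, by ring⟩
    refine hodd.dvd_of_dvd_mul_left ?_
    convert dvd_sub (hWC.mul_left P) (hPC.mul_left W) using 1
    ring
  have hW : |W| ≤ 1 + W ^ 2 := by nlinarith [sq_abs W, sq_nonneg (|W| - 1), abs_nonneg W]
  have hPW : P + (1 + W ^ 2) ≤ 2 * (P * (1 + W ^ 2)) := by nlinarith [sq_nonneg W]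
  have hPabs : |P| = P := abs_of_pos (by linarith)
  have hsub : |P - W| ≤ 2 * (P * (1 + W ^ 2)) := by linarith [abs_sub P W]
  have hadd : |1 + P * W| ≤ 2 * (P * (1 + W ^ 2)) := by
    have h := abs_add_le 1 (P * W)
    rw [abs_one, abs_mul, hPabs] at h
    nlinarith [sq_nonneg W]
  have hsmall : |(P - W) * (1 + P * W)| ≤ a := by
    rw [abs_mul]
    calc _ ≤ 2 * (P * (1 + W ^ 2)) * (2 * (P * (1 + W ^ 2))) := by gcongr
      _ = 4 * P ^ 2 * (1 + W ^ 2) ^ 2 := by ring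
      _ ≤ a := ha
  have hW1 : 1 ≤ (1 + W ^ 2) ^ 2 := one_le_pow₀ (by linarith [sq_nonneg W])
  have ha2 : 2 ≤ a := by nlinarith
  rcases mul_eq_zero.1 (Int.eq_zero_of_abs_lt_dvd hdvd (by linarith)) with h | h
  · linarith
  · have := Int.le_of_dvd one_pos (⟨-W, by linarith⟩ : P ∣ 1)
    linarith

theorem four_mul_sq_mul_sq_le {X : ℕ} (hX : 1 ≤ X) (W : ℤ) :
    4 * (2 ^ (2 * X + 1)) ^ 2 * (1 + W ^ 2) ^ 2 ≤ (16 * (1 + W ^ 2)) ^ (X + 1) := by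
  have hpow : 4 * ((2 : ℤ) ^ (2 * X + 1)) ^ 2 = 16 ^ (X + 1) := by
    rw [show (16 : ℤ) = 2 ^ 4 by norm_num, ← pow_mul, ← pow_mul]
    ring
  rw [hpow, mul_pow]
  gcongr
  · nlinarith [sq_nonneg W]
  · omega

end PellGrowth

section Quotients

/-- The number whose integer part is, for `V` large, congruent to `C(2X, X)` modulo `V`. -/
noncomputable def centralQuotient (V : ℝ) (X : ℕ) : ℝ := (V + 1) ^ (2 * X) / V ^ X

theorem pow_le_centralQuotient {V : ℝ} (hV : 0 < V) (X : ℕ) : V ^ X ≤ centralQuotient V X := by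
  rw [centralQuotient, le_div_iff₀ (by positivity), ← pow_add, ← two_mul]
  gcongr
  linarith

theorem add_one_pow_two_mul_eq (V : ℤ) (X : ℕ) :
    (V + 1) ^ (2 * X) = V ^ X * (X.centralBinom +
      V * ∑ i ∈ Finset.range X, V ^ i * ((2 * X).choose (X + (i + 1)) : ℤ)) +
        ∑ i ∈ Finset.range X, V ^ i * ((2 * X).choose i : ℤ) := by
  have h := add_pow V 1 (2 * X)
  rw [show 2 * X + 1 = X + (X + 1) by ring, Finset.sum_range_add, Finset.sum_range_succ'] at h
  simp only [one_pow, mul_one] at h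
  rw [h, Finset.mul_sum, mul_add, Finset.mul_sum, add_zero, Nat.centralBinom_eq_two_mul_choose,
    add_comm, add_comm (V ^ X * _)]
  refine congrArg₂ _ (congrArg₂ _ (Finset.sum_congr rfl fun i _ ↦ ?_) rfl) rfl
  ring

theorem sum_pow_mul_choose_mul_le {V : ℤ} (hV : 1 ≤ V) (X : ℕ) :
    (∑ i ∈ Finset.range X, V ^ i * ((2 * X).choose i : ℤ)) * V ≤ 4 ^ X * V ^ X := by
  calc (∑ i ∈ Finset.range X, V ^ i * ((2 * X).choose i : ℤ)) * V
      = ∑ i ∈ Finset.range X, V ^ (i + 1) * ((2 * X).choose i : ℤ) := by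
        rw [Finset.sum_mul]
        exact Finset.sum_congr rfl fun i _ ↦ by ring
    _ ≤ ∑ i ∈ Finset.range X, V ^ X * ((2 * X).choose i : ℤ) := by
        refine Finset.sum_le_sum fun i hi ↦ ?_
        have := Finset.mem_range.1 hi
        gcongr
        omega
    _ ≤ V ^ X * ∑ i ∈ Finset.range (2 * X + 1), ((2 * X).choose i : ℤ) := by
        rw [← Finset.mul_sum]
        gcongr
        omega
    _ = 4 ^ X * V ^ X := by
        rw [← Nat.cast_sum, Nat.sum_range_choose, pow_mul]
        push_cast
        ring

theorem exists_centralQuotient_sub {V : ℤ} (hV : 1 ≤ V) (X : ℕ) :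
    ∃ q : ℤ, 0 ≤ q ∧ 0 ≤ centralQuotient V X - (X.centralBinom + V * q : ℤ) ∧
      centralQuotient V X - (X.centralBinom + V * q : ℤ) ≤ 4 ^ X / V := by
  have hexp := add_one_pow_two_mul_eq V X
  have hr4 := sum_pow_mul_choose_mul_le hV X
  have hr0 : 0 ≤ ∑ i ∈ Finset.range X, V ^ i * ((2 * X).choose i : ℤ) :=
    Finset.sum_nonneg fun i _ ↦ by positivity
  set q := ∑ i ∈ Finset.range X, V ^ i * ((2 * X).choose (X + (i + 1)) : ℤ)
  set r := ∑ i ∈ Finset.range X, V ^ i * ((2 * X).choose i : ℤ)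
  have hV0 : (0 : ℝ) < V := by exact_mod_cast hV
  have hsub : centralQuotient V X - (X.centralBinom + V * q : ℤ) = r / (V : ℝ) ^ X := by
    have h : ((V : ℝ) + 1) ^ (2 * X) = V ^ X * (X.centralBinom + V * q) + r := by
      exact_mod_cast hexp
    rw [centralQuotient, h]
    push_cast
    field_simp
    ring
  refine ⟨q, Finset.sum_nonneg fun i _ ↦ by positivity, ?_, ?_⟩ <;> rw [hsub]
  · exact div_nonneg (by exact_mod_cast hr0) (by positivity)
  · rw [div_le_div_iff₀ (by positivity) hV0]
    exact_mod_cast hr4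

theorem pow_mul_one_sub_le {A ε : ℝ} (hA : 1 ≤ A) {n : ℕ} (hn : n ≤ ε * A) :
    A ^ n * (1 - ε) ≤ (A - 1) ^ n := by
  have hA0 : 0 < A := by linarith
  have hbernoulli := one_add_mul_le_pow (a := -A⁻¹) (by linarith [inv_le_one_of_one_le₀ hA]) n
  have hε : n * A⁻¹ ≤ ε := by rwa [← div_eq_mul_inv, div_le_iff₀ hA0]
  calc A ^ n * (1 - ε) ≤ A ^ n * (1 + -A⁻¹) ^ n := by
        gcongr
        linarith
    _ = (A - 1) ^ n := by
        rw [← mul_pow]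
        field_simp
        ring

section

variable {C K A A' ρ ε : ℝ} {m n : ℕ}

theorem mul_one_sub_le_div (hK : 0 < K) (hρ : 0 ≤ ρ) (hρA : A ^ m = ρ * A' ^ n) (hA : 1 ≤ A)
    (hε : ε ≤ 1) (hm : m ≤ ε * A) (hC : (A - 1) ^ m ≤ C) (hKA : K ≤ A' ^ n) :
    ρ * (1 - ε) ≤ C / K := by
  rw [le_div_iff₀ hK]
  calc ρ * (1 - ε) * K ≤ ρ * (1 - ε) * A' ^ n := by
        have : 0 ≤ 1 - ε := by linarith
        gcongr
    _ = A ^ m * (1 - ε) := by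
        rw [hρA]
        ring
    _ ≤ C := (pow_mul_one_sub_le hA hm).trans hC

theorem div_mul_one_sub_le (hK : 0 < K) (hρ : 0 ≤ ρ) (hρA : A ^ m = ρ * A' ^ n) (hA' : 1 ≤ A')
    (hε : ε ≤ 1) (hn : n ≤ ε * A') (hC : C ≤ A ^ m) (hKA : (A' - 1) ^ n ≤ K) :
    C / K * (1 - ε) ≤ ρ := by
  rw [div_mul_eq_mul_div, div_le_iff₀ hK]
  calc C * (1 - ε) ≤ A ^ m * (1 - ε) := by
        have : 0 ≤ 1 - ε := by linarith
        gcongr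
    _ = ρ * (A' ^ n * (1 - ε)) := by
        rw [hρA]
        ring
    _ ≤ ρ * K := by
        gcongr
        exact (pow_mul_one_sub_le hA' hn).trans hKA

end

theorem abs_sub_le_of_mul_one_sub_le {ρ σ ε L : ℝ} (hρ : 0 ≤ ρ) (hε : 0 ≤ ε) (hε2 : ε ≤ 1 / 2)
    (hρσ : ρ * (1 - ε) ≤ σ) (hσρ : σ * (1 - ε) ≤ ρ) (hL : ρ ≤ 2 * L ∨ σ ≤ 2 * L) :
    |σ - ρ| ≤ ε * (4 * L) ∧ ρ ≤ 4 * L := by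
  have hσ : 0 ≤ σ := (mul_nonneg hρ (by linarith)).trans hρσ
  have h4L : ρ ≤ 4 * L ∧ σ ≤ 4 * L := by rcases hL with h | h <;> constructor <;> nlinarith
  refine ⟨?_, h4L.1⟩
  have := mul_le_mul_of_nonneg_left h4L.1 hε
  have := mul_le_mul_of_nonneg_left h4L.2 hε
  rw [abs_le]
  constructor <;> linarith

open Pell in
theorem abs_yn_div_yn_sub_centralQuotient_le {X a a' : ℕ} (a1 : 1 < a) (a1' : 1 < a') {u V L : ℝ}
    (hX : 1 ≤ X) (hL : 1 ≤ L) (hV : 16 ≤ V) (hu : 8 * X * L ≤ u) (ha : a = u * (V + 1))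
    (ha' : a' = 2 * u ^ 2 * V)
    (hor : centralQuotient V X ≤ 2 * L ∨ (yn a1 (2 * X + 1) : ℝ) / yn a1' (X + 1) ≤ 2 * L) :
    |(yn a1 (2 * X + 1) : ℝ) / yn a1' (X + 1) - centralQuotient V X| ≤ 1 / (2 * V) ∧
      centralQuotient V X ≤ 4 * L := by
  have hX1 : (1 : ℝ) ≤ X := by exact_mod_cast hX
  have hu8 : 8 ≤ u := by nlinarith
  set ε := 1 / (8 * L * V) with hε
  have hεL : ε * (4 * L) = 1 / (2 * V) := by
    rw [hε]
    field_simp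
    ring
  have hε2 : ε ≤ 1 / 2 := by
    rw [hε]
    exact one_div_le_one_div_of_le two_pos (by nlinarith)
  have hρ : 0 ≤ centralQuotient V X := by
    unfold centralQuotient
    positivity
  have hρA : (2 * a : ℝ) ^ (2 * X) = centralQuotient V X * (2 * a' : ℝ) ^ X := by
    rw [ha, ha', centralQuotient, div_mul_eq_mul_div, eq_div_iff (by positivity), pow_mul, pow_mul,
      ← mul_pow, ← mul_pow]
    ring
  have hK : (0 : ℝ) < yn a1' (X + 1) := by exact_mod_cast strictMono_y a1' X.succ_pos
  have ha1 : (1 : ℝ) ≤ 2 * a := by exact_mod_cast (by omega : 1 ≤ 2 * a)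
  have ha1' : (1 : ℝ) ≤ 2 * a' := by exact_mod_cast (by omega : 1 ≤ 2 * a')
  have hm : ((2 * X : ℕ) : ℝ) ≤ ε * (2 * a) := by
    rw [hε, ha, one_div_mul_eq_div, le_div_iff₀ (by positivity)]
    push_cast
    nlinarith
  have hn : (X : ℝ) ≤ ε * (2 * a') := by
    rw [hε, ha', one_div_mul_eq_div, le_div_iff₀ (by positivity)]
    nlinarith [mul_le_mul hu hu8 (by norm_num) (by linarith),
      mul_pos (by linarith : 0 < V) (by linarith : 0 < u)]
  rw [← hεL]
  refine abs_sub_le_of_mul_one_sub_le hρ (by positivity) hε2 ?_ ?_ hor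
  · exact mul_one_sub_le_div hK hρ hρA ha1 (by linarith) hm (by exact_mod_cast pow_le_yn_succ a1 _)
      (by exact_mod_cast yn_succ_le_pow a1' X)
  · exact div_mul_one_sub_le hK hρ hρA ha1' (by linarith) hn (by exact_mod_cast yn_succ_le_pow a1 _)
      (by exact_mod_cast pow_le_yn_succ a1' X)

end Quotients

/-- The data of a Diophantine description of the two conditions `b ∣ 2 ^ (2 X + 1)` and
`Y ∣ C(2X, X)`: the parameters `X`, `Y`, `b`, the precision `Θ` and the unknowns `h`, `k`, `l`,
`w`, `x`, `y`. -/
structure BinomSystem (R : Type*) where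
  X : R
  Y : R
  b : R
  Θ : R
  h : R
  k : R
  l : R
  w : R
  x : R
  y : R

namespace BinomSystem

section Polynomials

variable {R R' : Type*} [CommRing R] [CommRing R']

/-- The image of a system under a map of its entries. -/
@[simps]
def map (f : R → R') (p : BinomSystem R) : BinomSystem R' :=
  ⟨f p.X, f p.Y, f p.b, f p.Θ, f p.h, f p.k, f p.l, f p.w, f p.x, f p.y⟩

variable (p : BinomSystem R)

/-- The base `V` in which the digits of `(V + 1) ^ (2 X)` are read: a multiple of `Y` that is large
compared to `(b w) ^ 2`. -/
def V : R := 16 * p.Y * p.b ^ 2 * p.Θ * (1 + p.w ^ 2)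

/-- A positive number that is large compared to `X Y l`. -/
def u : R := (1 + p.X ^ 2) * (1 + p.Y ^ 2) * (1 + p.l ^ 2)

/-- The Pell parameter of `C`. -/
def a : R := p.u * (p.V + 1)

/-- The Pell parameter of `K`. -/
def a' : R := 2 * p.u ^ 2 * p.V

/-- In a solution, `C` is the Pell number `ψ_{2 X + 1}(a)`, which is close to `(2 a) ^ (2 X)`. -/
def C : R := 2 * p.X + 1 + (p.a - 1) * p.h

/-- In a solution, `K` is the Pell number `ψ_{X + 1}(a')`, which is close to `(2 a') ^ X`. -/
def K : R := p.X + 1 + (p.a' - 1) * p.k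

/-- The description of `C = ψ_{2 X + 1}(a)`. -/
def pell : PellSystem R := ⟨p.a, 2 * p.X + 1, p.C, p.x, p.y⟩

/-- The modulus of the congruence forcing `b w = 2 ^ (2 X + 1)`. -/
def S : R := 4 * p.a - 5

/-- The number that vanishes modulo `4 a - 5` when `b w = 2 ^ (2 X + 1)`. -/
def T : R := 3 * (p.b * p.w) * p.C - 2 * ((p.b * p.w) ^ 2 - 1)

/-- The number whose smallness relative to `K` says that `l Y` is the integer nearest to `C / K`. -/
def gap : R := p.C - p.K * p.l * p.Y

variable (f : R →+* R')

theorem map_V : (p.map f).V = f p.V := by simp [V, map_ofNat]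

theorem map_u : (p.map f).u = f p.u := by simp [u]

theorem map_a : (p.map f).a = f p.a := by simp [a, map_V, map_u]

theorem map_a' : (p.map f).a' = f p.a' := by simp [a', map_V, map_u, map_ofNat]

theorem map_C : (p.map f).C = f p.C := by simp [C, map_a, map_ofNat]

theorem map_K : (p.map f).K = f p.K := by simp [K, map_a']

theorem map_pell : (p.map f).pell = p.pell.map f := by
  simp [pell, PellSystem.map, map_a, map_C, map_ofNat]

theorem map_S : (p.map f).S = f p.S := by simp [S, map_a, map_ofNat]

theorem map_T : (p.map f).T = f p.T := by simp [T, map_C, map_ofNat]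

theorem map_gap : (p.map f).gap = f p.gap := by simp [gap, map_C, map_K]

end Polynomials

/-- The parameters other than `X` are positive. -/
structure IsPositive (p : BinomSystem ℤ) : Prop where
  one_le_Y : 1 ≤ p.Y
  one_le_b : 1 ≤ p.b
  one_le_Θ : 1 ≤ p.Θ

/-- The conditions on the unknowns apart from the bound on `gap`, which is needed with the constant
`4` in one direction and obtained with the constant `Θ` in the other. -/
structure IsSolution (p : BinomSystem ℤ) : Prop where
  l_ne_zero : p.l ≠ 0
  x_ne_zero : p.x ≠ 0
  isSquare_product : IsSquare p.pell.product
  isSquare_pellForm : IsSquare (pellForm p.a' p.K)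
  dvd : p.S ∣ p.T

variable {p : BinomSystem ℤ} {X : ℕ}

section Bounds

variable (p) in
theorem two_mul_one_add_sq_le_u (hY : 1 ≤ p.Y) : 2 * (1 + p.X ^ 2) ≤ p.u := by
  have hY2 : 2 ≤ 1 + p.Y ^ 2 := by nlinarith
  calc 2 * (1 + p.X ^ 2) = (1 + p.X ^ 2) * 2 * 1 := by ring
    _ ≤ p.u := by
      unfold u
      gcongr
      linarith [sq_nonneg p.l]

variable (p) in
theorem eight_mul_mul_le_u : 8 * p.X * (p.l * p.Y) ≤ p.u := by
  have h (n : ℤ) : 2 * |n| ≤ 1 + n ^ 2 := by nlinarith [sq_nonneg (|n| - 1), sq_abs n]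
  calc 8 * p.X * (p.l * p.Y) ≤ |8 * p.X * (p.l * p.Y)| := le_abs_self _
    _ = 2 * |p.X| * (2 * |p.Y|) * (2 * |p.l|) := by
        simp only [abs_mul, Nat.abs_ofNat]
        ring
    _ ≤ p.u := by
      unfold u
      gcongr <;> exact h _

theorem IsPositive.sixteen_mul_sq_le_V (hp : p.IsPositive) :
    16 * p.Θ * (p.b * p.w) ^ 2 ≤ p.V := by
  have hΘ := hp.one_le_Θ
  calc 16 * p.Θ * (p.b * p.w) ^ 2 = 1 * (16 * p.Θ * (p.b * p.w) ^ 2) := (one_mul _).symm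
    _ ≤ p.Y * (16 * p.Θ * (p.b * p.w) ^ 2) := by
      gcongr
      exact hp.one_le_Y
    _ ≤ p.Y * (16 * p.Θ * (p.b * p.w) ^ 2) + 16 * p.Y * p.b ^ 2 * p.Θ := by
      have := hp.one_le_Y
      linarith [show 0 ≤ 16 * p.Y * p.b ^ 2 * p.Θ by positivity]
    _ = p.V := by
      unfold V
      ring

theorem IsPositive.sixteen_mul_one_add_sq_le_V (hp : p.IsPositive) :
    16 * (1 + (p.b * p.w) ^ 2) ≤ p.V := by
  have hb : 1 ≤ p.b ^ 2 := one_le_pow₀ hp.one_le_b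
  have hYΘ : 1 ≤ p.Y * p.Θ := one_le_mul_of_one_le_of_one_le hp.one_le_Y hp.one_le_Θ
  calc 16 * (1 + (p.b * p.w) ^ 2) ≤ 16 * (p.b ^ 2 + (p.b * p.w) ^ 2) := by gcongr
    _ = 1 * (16 * (p.b ^ 2 + (p.b * p.w) ^ 2)) := (one_mul _).symm
    _ ≤ p.Y * p.Θ * (16 * (p.b ^ 2 + (p.b * p.w) ^ 2)) := by gcongr
    _ = p.V := by
      unfold V
      ring

theorem IsPositive.sixteen_le_V (hp : p.IsPositive) : 16 ≤ p.V := by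
  linarith [hp.sixteen_mul_one_add_sq_le_V, sq_nonneg (p.b * p.w)]

theorem IsPositive.two_le_u (hp : p.IsPositive) : 2 ≤ p.u := by
  linarith [two_mul_one_add_sq_le_u p hp.one_le_Y, sq_nonneg p.X]

theorem IsPositive.four_mul_add_four_lt_a (hp : p.IsPositive) : 4 * p.X + 4 < p.a := by
  have := two_mul_one_add_sq_le_u p hp.one_le_Y
  have := hp.sixteen_le_V
  have := hp.two_le_u
  unfold a
  nlinarith [sq_nonneg (p.X - 1)]

theorem IsPositive.a_lt_a' (hp : p.IsPositive) : p.a < p.a' := by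
  have hV := hp.sixteen_le_V
  have hu := hp.two_le_u
  calc p.a < p.u * (4 * p.V) := by
        unfold a
        gcongr
        linarith
    _ = 2 * p.V * (p.u * 2) := by ring
    _ ≤ 2 * p.V * (p.u * p.u) := by gcongr
    _ = p.a' := by
        unfold a'
        ring

theorem IsPositive.three_lt_a (hp : p.IsPositive) : 3 < p.a := by
  have := hp.sixteen_le_V
  have := hp.two_le_u
  unfold a
  nlinarith

end Bounds

open Pell

section Sufficiency

variable {a a' : ℕ} (a1 : 1 < a) (a1' : 1 < a')

theorem IsSolution.C_eq_yn (h : p.IsSolution) (hp : p.IsPositive) (hX : p.X = X) (ha : p.a = a) :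
    p.C = yn a1 (2 * X + 1) := by
  have := hp.four_mul_add_four_lt_a
  refine PellSystem.C_eq_yn_of_isSquare_product (p := p.pell) a1 ha ?_ (Nat.succ_pos _) ?_ ?_
    h.x_ne_zero h.isSquare_product
  · simp [pell, hX]
  · simp only [pell]
    push_cast
    linarith
  · exact ⟨p.h, by simp only [pell, C]; ring⟩

theorem abs_K_lt (hlY : p.l * p.Y ≠ 0) (hgap : 4 * p.gap ^ 2 < p.K ^ 2) : |p.K| < 2 * |p.C| := by
  have hgap' : 2 * |p.gap| < |p.K| := by
    rw [← abs_two, ← abs_mul]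
    exact sq_lt_sq.1 (by linarith)
  have hK : |p.K| ≤ |p.C - p.gap| := by
    rw [gap, sub_sub_cancel, mul_assoc, abs_mul]
    exact le_mul_of_one_le_right (abs_nonneg _) (Int.one_le_abs hlY)
  linarith [abs_sub p.C p.gap]

theorem IsSolution.K_eq_yn (h : p.IsSolution) (hp : p.IsPositive) (hX : p.X = X) (ha : p.a = a)
    (ha' : p.a' = a') (hC : p.C = yn a1 (2 * X + 1)) (hgap : 4 * p.gap ^ 2 < p.K ^ 2) :
    p.K = yn a1' (X + 1) := by
  have haX := hp.four_mul_add_four_lt_a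
  have haa' := hp.a_lt_a'
  rw [ha, hX] at haX
  rw [ha, ha'] at haa'
  have hlY : p.l * p.Y ≠ 0 := mul_ne_zero h.l_ne_zero (by linarith [hp.one_le_Y])
  refine eq_yn_of_isSquare_pellForm a1' X.succ_pos (by omega) (ha' ▸ h.isSquare_pellForm) ?_ ?_
  · exact ⟨p.k, by rw [← ha', K, hX]; push_cast; ring⟩
  · calc |p.K| < 2 * |p.C| := abs_K_lt hlY hgap
      _ = 2 * yn a1 (2 * X + 1) := by rw [hC, Nat.abs_cast]
      _ ≤ 2 * (2 * a) ^ (2 * X) := by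
        gcongr
        exact_mod_cast yn_succ_le_pow a1 (2 * X)
      _ ≤ (2 * a' - 1) * (2 * a' - 1) ^ (2 * X) := by gcongr <;> omega
      _ = (2 * (a' : ℤ) - 1) ^ (2 * X + 1) := (pow_succ' _ _).symm
      _ ≤ yn a1' (2 * (X + 1)) := pow_le_yn_succ a1' _

theorem one_le_l (hY : 1 ≤ p.Y) (hC : 0 < p.C) (hK : 0 < p.K) (hl : p.l ≠ 0)
    (hgap : 4 * p.gap ^ 2 < p.K ^ 2) : 1 ≤ p.l := by
  by_contra! hlt
  have hl1 : 1 ≤ -p.l := by omega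
  have hKl : p.K * p.l * p.Y ≤ -p.K := by
    calc p.K * p.l * p.Y = -(p.K * (-p.l * p.Y)) := by ring
      _ ≤ -(p.K * (1 * 1)) := by
        gcongr
      _ = -p.K := by ring
  unfold gap at hgap
  nlinarith

theorem abs_div_sub_lt (hK : 0 < p.K) (hgap : 4 * p.gap ^ 2 < p.K ^ 2) :
    |(p.C : ℝ) / p.K - (p.l * p.Y : ℤ)| < 1 / 2 := by
  have hKr : (0 : ℝ) < p.K := by exact_mod_cast hK
  have hgap' : 2 * |p.gap| < p.K := by
    rw [← abs_two, ← abs_mul, ← abs_of_pos hK]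
    exact sq_lt_sq.1 (by linarith)
  have hgapr : 2 * |(p.C : ℝ) - p.K * (p.l * p.Y)| < p.K := by
    have := (Int.cast_lt (R := ℝ)).2 hgap'
    simpa [gap, mul_assoc] using this
  rw [div_sub' hKr.ne', abs_div, abs_of_pos hKr, div_lt_iff₀ hKr]
  push_cast
  linarith

theorem IsPositive.abs_div_sub_centralQuotient_le (hp : p.IsPositive) (hX : p.X = X) (hX1 : 1 ≤ X)
    (ha : p.a = a) (ha' : p.a' = a') (hl : 1 ≤ p.l)
    (hor : centralQuotient p.V X ≤ 2 * (p.l * p.Y : ℤ) ∨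
      (yn a1 (2 * X + 1) : ℝ) / yn a1' (X + 1) ≤ 2 * (p.l * p.Y : ℤ)) :
    |(yn a1 (2 * X + 1) : ℝ) / yn a1' (X + 1) - centralQuotient p.V X| ≤ 1 / (2 * p.V) ∧
      centralQuotient p.V X ≤ 4 * (p.l * p.Y : ℤ) := by
  have hL : 1 ≤ p.l * p.Y := one_le_mul_of_one_le_of_one_le hl hp.one_le_Y
  refine abs_yn_div_yn_sub_centralQuotient_le a1 a1' (u := p.u) hX1 (by exact_mod_cast hL)
    (by exact_mod_cast hp.sixteen_le_V) ?_ ?_ ?_ hor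
  · exact_mod_cast hX ▸ eight_mul_mul_le_u p
  · exact_mod_cast (ha.symm.trans rfl : (a : ℤ) = p.u * (p.V + 1))
  · exact_mod_cast (ha'.symm.trans rfl : (a' : ℤ) = 2 * p.u ^ 2 * p.V)

theorem IsSolution.b_mul_w_eq (h : p.IsSolution) (hp : p.IsPositive) (hX : p.X = X) (hX1 : 1 ≤ X)
    (ha : p.a = a) (hC : p.C = yn a1 (2 * X + 1)) (hl : 1 ≤ p.l)
    (hV : p.V ^ X ≤ 4 * (p.l * p.Y)) : p.b * p.w = 2 ^ (2 * X + 1) := by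
  have hV16 := hp.sixteen_le_V
  have hL : 1 ≤ p.l * p.Y := one_le_mul_of_one_le_of_one_le hl hp.one_le_Y
  have hu : 4 * (p.l * p.Y) ≤ p.u := by
    have := eight_mul_mul_le_u p
    rw [hX] at this
    nlinarith [(by exact_mod_cast hX1 : (1 : ℤ) ≤ X)]
  have hVa : p.V ^ (X + 1) ≤ p.a := by
    calc p.V ^ (X + 1) = p.V ^ X * p.V := pow_succ _ _
      _ ≤ p.u * (p.V + 1) :=
        mul_le_mul (hV.trans hu) (by linarith) (by linarith) (by linarith)
  refine eq_of_four_mul_sub_five_dvd (le_self_pow₀ one_le_two (Nat.succ_ne_zero _)) h.dvd ?_ ?_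
  · rw [hC, ha]
    exact four_mul_sub_five_dvd a1 _
  · exact (four_mul_sq_mul_sq_le hX1 _).trans
      ((pow_le_pow_left₀ (by positivity) hp.sixteen_mul_one_add_sq_le_V _).trans hVa)

/-- Both sides are integers close to `C / K`. -/
theorem IsPositive.exists_l_mul_Y_eq (hp : p.IsPositive) (hw : p.b * p.w = 2 ^ (2 * X + 1))
    {σ : ℝ} (hσL : |σ - (p.l * p.Y : ℤ)| < 1 / 2)
    (hσ : |σ - centralQuotient p.V X| ≤ 1 / (2 * p.V)) :
    ∃ q, p.l * p.Y = X.centralBinom + p.V * q := by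
  have hV16 := hp.sixteen_le_V
  obtain ⟨q, -, hZ₀, hZ₁⟩ := exists_centralQuotient_sub (by linarith : 1 ≤ p.V) X
  refine ⟨q, ?_⟩
  set Z : ℤ := X.centralBinom + p.V * q
  have hV4 : 16 * (4 : ℝ) ^ X ≤ p.V := by
    have h4 : (4 : ℤ) ^ X ≤ (2 ^ (2 * X + 1)) ^ 2 := by
      rw [show (4 : ℤ) = 2 ^ 2 by norm_num, ← pow_mul, ← pow_mul]
      exact pow_le_pow_right₀ one_le_two (by omega)
    have := hp.sixteen_mul_one_add_sq_le_V
    rw [hw] at this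
    exact_mod_cast (by linarith : 16 * (4 : ℤ) ^ X ≤ p.V)
  have hVr : (16 : ℝ) ≤ p.V := by exact_mod_cast hV16
  have hZV : (4 : ℝ) ^ X / p.V ≤ 1 / 16 := by
    rw [div_le_div_iff₀ (by linarith) (by norm_num)]
    linarith
  have hVinv : 1 / (2 * (p.V : ℝ)) ≤ 1 / 32 := by
    apply one_div_le_one_div_of_le <;> linarith
  have hlt : |((p.l * p.Y : ℤ) : ℝ) - Z| < 1 := by
    rw [abs_lt] at hσL ⊢
    rw [abs_le] at hσ
    constructor <;> linarith
  have hlt' : |p.l * p.Y - Z| < 1 := by exact_mod_cast hlt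
  linarith [Int.abs_lt_one_iff.1 hlt']

theorem Y_dvd_V : p.Y ∣ p.V := ⟨16 * p.b ^ 2 * p.Θ * (1 + p.w ^ 2), by unfold V; ring⟩

theorem IsSolution.dvd_and_dvd_centralBinom (h : p.IsSolution) (hp : p.IsPositive) (hX : p.X = X)
    (hX1 : 1 ≤ X) (hgap : 4 * p.gap ^ 2 < p.K ^ 2) :
    p.b ∣ 2 ^ (2 * X + 1) ∧ p.Y ∣ X.centralBinom := by
  have ha1 := hp.three_lt_a
  have haa' := hp.a_lt_a'
  obtain ⟨a, ha⟩ := Int.eq_ofNat_of_zero_le (by linarith : 0 ≤ p.a)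
  obtain ⟨a', ha'⟩ := Int.eq_ofNat_of_zero_le (by linarith : 0 ≤ p.a')
  have a1 : 1 < a := by omega
  have a1' : 1 < a' := by omega
  have hC := h.C_eq_yn a1 hp hX ha
  have hK := h.K_eq_yn a1 a1' hp hX ha ha' hC hgap
  have hCpos : 0 < p.C := by
    rw [hC]
    exact_mod_cast strictMono_y a1 (Nat.succ_pos (2 * X))
  have hKpos : 0 < p.K := by
    rw [hK]
    exact_mod_cast strictMono_y a1' X.succ_pos
  have hl := one_le_l hp.one_le_Y hCpos hKpos h.l_ne_zero hgap
  have hσL := abs_div_sub_lt hKpos hgap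
  rw [hC, hK, Int.cast_natCast, Int.cast_natCast] at hσL
  have hL : (1 : ℝ) ≤ (p.l * p.Y : ℤ) := by
    exact_mod_cast one_le_mul_of_one_le_of_one_le hl hp.one_le_Y
  obtain ⟨hσ, hρ⟩ := hp.abs_div_sub_centralQuotient_le a1 a1' hX hX1 ha ha' hl
    (Or.inr (by linarith [(abs_lt.1 hσL).2]))
  have hV0 : (0 : ℝ) < p.V := by
    have := hp.sixteen_le_V
    exact_mod_cast (by linarith : 0 < p.V)
  have hVX : p.V ^ X ≤ 4 * (p.l * p.Y) := by
    exact_mod_cast (pow_le_centralQuotient hV0 X).trans hρ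
  have hw := h.b_mul_w_eq a1 hp hX hX1 ha hC hl hVX
  obtain ⟨q, hq⟩ := hp.exists_l_mul_Y_eq hw hσL hσ
  refine ⟨⟨p.w, hw.symm⟩, ?_⟩
  rw [← dvd_add_left (Y_dvd_V.mul_right q), ← hq]
  exact dvd_mul_left _ _

end Sufficiency

section Necessity

theorem IsPositive.sixty_four_mul_le_V (hp : p.IsPositive) (hw : p.b * p.w = 2 ^ (2 * X + 1)) :
    64 * p.Θ * 16 ^ X ≤ p.V := by
  have h16 : ((2 : ℤ) ^ (2 * X + 1)) ^ 2 = 4 * 16 ^ X := by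
    rw [show (16 : ℤ) = 2 ^ 4 by norm_num, ← pow_mul, ← pow_mul]
    ring
  have := hp.sixteen_mul_sq_le_V
  rw [hw, h16] at this
  linarith

theorem IsPositive.theta_mul_gap_sq_lt (hp : p.IsPositive) (hw : p.b * p.w = 2 ^ (2 * X + 1))
    (hK : 0 < p.K) (h : |(p.C : ℝ) / p.K - (p.l * p.Y : ℤ)| ≤ 2 * (4 ^ X / p.V)) :
    p.Θ * p.gap ^ 2 < p.K ^ 2 := by
  have hKr : (0 : ℝ) < p.K := by exact_mod_cast hK
  have hV0 : (0 : ℝ) < p.V := by exact_mod_cast (by linarith [hp.sixteen_le_V] : 0 < p.V)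
  have hV : 64 * (p.Θ : ℝ) * 16 ^ X ≤ p.V := by exact_mod_cast hp.sixty_four_mul_le_V hw
  have hV1 : (1 : ℝ) ≤ p.V := by exact_mod_cast (by linarith [hp.sixteen_le_V] : 1 ≤ p.V)
  have hΘ : (1 : ℝ) ≤ p.Θ := by exact_mod_cast hp.one_le_Θ
  have hlt : (p.Θ : ℝ) * (2 * (4 ^ X / p.V)) ^ 2 < 1 := by
    have h16 : (4 : ℝ) ^ X * 4 ^ X = 16 ^ X := by
      rw [← mul_pow]
      norm_num
    have heq : (p.Θ : ℝ) * (2 * (4 ^ X / p.V)) ^ 2 = 4 * p.Θ * 16 ^ X / p.V ^ 2 := by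
      rw [← h16]
      field_simp
      ring
    rw [heq, div_lt_one (by positivity)]
    have : 0 < (p.Θ : ℝ) * 16 ^ X := by positivity
    nlinarith
  have hgap : (p.gap : ℝ) = (p.C / p.K - (p.l * p.Y : ℤ)) * p.K := by
    rw [sub_mul, div_mul_cancel₀ _ hKr.ne', gap]
    push_cast
    ring
  have hreal : (p.Θ : ℝ) * p.gap ^ 2 < (p.K : ℝ) ^ 2 := by
    calc (p.Θ : ℝ) * p.gap ^ 2
        = p.Θ * |(p.C : ℝ) / p.K - (p.l * p.Y : ℤ)| ^ 2 * (p.K : ℝ) ^ 2 := by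
          rw [hgap, sq_abs]
          ring
      _ ≤ p.Θ * (2 * (4 ^ X / p.V)) ^ 2 * (p.K : ℝ) ^ 2 := by gcongr
      _ < 1 * (p.K : ℝ) ^ 2 := by gcongr
      _ = (p.K : ℝ) ^ 2 := one_mul _
  exact_mod_cast hreal

theorem exists_isSolution {a a' : ℕ} (a1 : 1 < a) (a1' : 1 < a') (hX : p.X = X) (ha : p.a = a)
    (ha' : p.a' = a') (hl : p.l ≠ 0) (hw : p.b * p.w = 2 ^ (2 * X + 1)) :
    ∃ h k x y : ℤ, IsSolution {p with h := h, k := k, x := x, y := y} ∧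
      C {p with h := h, k := k, x := x, y := y} = yn a1 (2 * X + 1) ∧
      K {p with h := h, k := k, x := x, y := y} = yn a1' (X + 1) := by
  obtain ⟨h, hh⟩ := sub_one_dvd_yn_sub a1 (2 * X + 1)
  obtain ⟨k, hk⟩ := sub_one_dvd_yn_sub a1' (X + 1)
  obtain ⟨x, y, hx, hsq⟩ := PellSystem.exists_isSquare_product a1 (2 * X).succ_pos
  set q : BinomSystem ℤ := {p with h := h, k := k, x := x, y := y}
  have hqX : q.X = X := hX
  have hqa : q.a = a := ha
  have hqa' : q.a' = a' := ha'
  have hqw : q.b * q.w = 2 ^ (2 * X + 1) := hw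
  have hC : q.C = yn a1 (2 * X + 1) := by
    rw [C, hqX, hqa, show q.h = h from rfl, ← hh]
    push_cast
    ring
  have hK : q.K = yn a1' (X + 1) := by
    rw [K, hqX, hqa', show q.k = k from rfl, ← hk]
    push_cast
    ring
  refine ⟨h, k, x, y, ⟨hl, hx, ?_, ?_, ?_⟩, hC, hK⟩
  · have hpell : q.pell = ⟨a, (2 * X + 1 : ℕ), yn a1 (2 * X + 1), x, y⟩ := by
      simp only [pell, hqX, hqa, hC]
      push_cast
      rfl
    exact hpell ▸ hsq
  · rw [hqa', hK, pellForm_yn]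
    exact IsSquare.sq _
  · rw [S, T, hC, hqa, hqw]
    exact four_mul_sub_five_dvd a1 _

theorem IsPositive.exists_centralQuotient_sub_mul (hp : p.IsPositive)
    (hYX : p.Y ∣ X.centralBinom) :
    ∃ l : ℤ, 1 ≤ l ∧ 0 ≤ centralQuotient p.V X - (l * p.Y : ℤ) ∧
      centralQuotient p.V X - (l * p.Y : ℤ) ≤ 4 ^ X / p.V := by
  have hV1 : 1 ≤ p.V := by linarith [hp.sixteen_le_V]
  obtain ⟨q, hq, hZ₀, hZ₁⟩ := exists_centralQuotient_sub hV1 X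
  obtain ⟨l, hl⟩ := dvd_add hYX (Y_dvd_V.mul_right q)
  rw [hl, mul_comm] at hZ₀ hZ₁
  have hpos : 0 < p.Y * l := by
    rw [← hl]
    have := X.centralBinom_pos
    positivity
  exact ⟨l, pos_of_mul_pos_right hpos (by linarith [hp.one_le_Y]), hZ₀, hZ₁⟩

theorem IsPositive.abs_yn_div_yn_sub_le {a a' : ℕ} (a1 : 1 < a) (a1' : 1 < a')
    (hp : p.IsPositive) (hX : p.X = X) (hX1 : 1 ≤ X) (ha : p.a = a) (ha' : p.a' = a')
    (hl : 1 ≤ p.l) (hw : p.b * p.w = 2 ^ (2 * X + 1))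
    (h₀ : 0 ≤ centralQuotient p.V X - (p.l * p.Y : ℤ))
    (h₁ : centralQuotient p.V X - (p.l * p.Y : ℤ) ≤ 4 ^ X / p.V) :
    |(yn a1 (2 * X + 1) : ℝ) / yn a1' (X + 1) - (p.l * p.Y : ℤ)| ≤ 2 * (4 ^ X / p.V) := by
  have hV0 : (0 : ℝ) < p.V := by exact_mod_cast (by linarith [hp.sixteen_le_V] : 0 < p.V)
  have hV : (4 : ℝ) ^ X ≤ p.V := by
    have h64 := hp.sixty_four_mul_le_V hw
    have h416 : (4 : ℤ) ^ X ≤ 16 ^ X := by gcongr; norm_num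
    have : (4 : ℤ) ^ X ≤ p.V := by nlinarith [hp.one_le_Θ, pow_pos (by norm_num : (0 : ℤ) < 16) X]
    exact_mod_cast this
  have h41 : (4 : ℝ) ^ X / p.V ≤ 1 := (div_le_one hV0).2 hV
  have hinv : 1 / (2 * (p.V : ℝ)) ≤ 4 ^ X / p.V := by
    rw [div_le_div_iff₀ (by linarith) hV0]
    nlinarith [one_le_pow₀ (n := X) (by norm_num : (1 : ℝ) ≤ 4)]
  have hL : (1 : ℝ) ≤ (p.l * p.Y : ℤ) := by
    exact_mod_cast one_le_mul_of_one_le_of_one_le hl hp.one_le_Y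
  obtain ⟨hσ, -⟩ := hp.abs_div_sub_centralQuotient_le a1 a1' hX hX1 ha ha' hl
    (Or.inl (by linarith))
  rw [abs_le] at hσ ⊢
  constructor <;> linarith

theorem exists_isSolution_of_dvd {Y b Θ : ℤ} (hX : 1 ≤ X) (hY : 1 ≤ Y) (hb : 1 ≤ b) (hΘ : 1 ≤ Θ)
    (hbX : b ∣ 2 ^ (2 * X + 1)) (hYX : Y ∣ X.centralBinom) :
    ∃ p : BinomSystem ℤ, p.X = X ∧ p.Y = Y ∧ p.b = b ∧ p.Θ = Θ ∧ p.IsSolution ∧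
      Θ * p.gap ^ 2 < p.K ^ 2 := by
  obtain ⟨w, hw⟩ := hbX
  obtain ⟨l, hl, h₀, h₁⟩ := IsPositive.exists_centralQuotient_sub_mul
    (p := ⟨X, Y, b, Θ, 0, 0, 0, w, 0, 0⟩) ⟨hY, hb, hΘ⟩ hYX
  set p : BinomSystem ℤ := ⟨X, Y, b, Θ, 0, 0, l, w, 0, 0⟩
  have hp : p.IsPositive := ⟨hY, hb, hΘ⟩
  have hpa := hp.three_lt_a
  have hpaa' := hp.a_lt_a'
  obtain ⟨a, ha⟩ := Int.eq_ofNat_of_zero_le (by linarith : 0 ≤ p.a)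
  obtain ⟨a', ha'⟩ := Int.eq_ofNat_of_zero_le (by linarith : 0 ≤ p.a')
  have a1 : 1 < a := by omega
  have a1' : 1 < a' := by omega
  obtain ⟨h, k, x, y, hsol, hC, hK⟩ := exists_isSolution (p := p) a1 a1' rfl ha ha'
    (by change l ≠ 0; omega) hw.symm
  refine ⟨_, rfl, rfl, rfl, rfl, hsol,
    IsPositive.theta_mul_gap_sq_lt (X := X) ⟨hY, hb, hΘ⟩ hw.symm ?_ ?_⟩
  · rw [hK]
    exact_mod_cast strictMono_y a1' X.succ_pos
  · rw [hC, hK, Int.cast_natCast, Int.cast_natCast]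
    exact hp.abs_yn_div_yn_sub_le a1 a1' rfl hX ha ha' hl hw.symm h₀ h₁

end Necessity

end BinomSystem

/-! ### Forms and their coefficients in base `β` -/

section Forms

open MvPolynomial

theorem exists_isHomogeneous_eval_cons_one_eq {R : Type*} [CommRing R] {n d : ℕ}
    (P : MvPolynomial (Fin n) R) (hd : P.totalDegree ≤ d) :
    ∃ F : MvPolynomial (Fin (n + 1)) R, F.IsHomogeneous d ∧
      ∀ v : Fin n → R, eval (Fin.cons 1 v) F = eval v P := by
  refine ⟨∑ k ∈ Finset.range (P.totalDegree + 1),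
    X 0 ^ (d - k) * rename Fin.succ (homogeneousComponent k P), ?_, fun v ↦ ?_⟩
  · refine IsHomogeneous.sum _ _ _ fun k hk ↦ ?_
    have hkd : d - k + k = d := by
      rw [Finset.mem_range] at hk
      omega
    have h := (isHomogeneous_X_pow (R := R) (0 : Fin (n + 1)) (d - k)).mul
      ((homogeneousComponent_isHomogeneous k P).rename_isHomogeneous (f := Fin.succ))
    rwa [hkd] at h
  · conv_rhs => rw [← sum_homogeneousComponent P]
    simp [eval_rename, Function.comp_def]

variable {n : ℕ}

/-- The exponent of `β` produced by the monomial with exponent vector `α` when the variable `i`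
is given the weight `(δ + 1) ^ i`. -/
def weight (δ : ℕ) (α : Fin n → ℕ) : ℕ := ∑ i, α i * (δ + 1) ^ (i : ℕ)

theorem weight_lt {δ : ℕ} {α : Fin n → ℕ} (hα : ∀ i, α i ≤ δ) : weight δ α < (δ + 1) ^ n :=
  (finFunctionFinEquiv fun i ↦ (⟨α i, Nat.lt_succ_of_le (hα i)⟩ : Fin (δ + 1))).2

theorem weight_inj {δ : ℕ} {α α' : Fin n → ℕ} (hα : ∀ i, α i ≤ δ) (hα' : ∀ i, α' i ≤ δ) :
    weight δ α = weight δ α' ↔ α = α' := by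
  refine ⟨fun h ↦ ?_, fun h ↦ h ▸ rfl⟩
  have := finFunctionFinEquiv.injective (Fin.ext h :
    finFunctionFinEquiv (fun i ↦ (⟨α i, Nat.lt_succ_of_le (hα i)⟩ : Fin (δ + 1))) =
      finFunctionFinEquiv fun i ↦ ⟨α' i, Nat.lt_succ_of_le (hα' i)⟩)
  funext i
  exact congrArg Fin.val (congrFun this i)

theorem sum_mul_pow_pow_eq {R : Type*} [CommSemiring R] (δ : ℕ) (x : Fin n → R) (β : R) :
    (∑ i, x i * β ^ (δ + 1) ^ (i : ℕ)) ^ δ =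
      ∑ α ∈ Finset.piAntidiag Finset.univ δ,
        (Nat.multinomial Finset.univ α * ∏ i, x i ^ α i) * β ^ weight δ α := by
  rw [Finset.sum_pow_eq_sum_piAntidiag]
  refine Finset.sum_congr rfl fun α _ ↦ ?_
  simp only [mul_pow, Finset.prod_mul_distrib, ← pow_mul, weight, mul_assoc,
    Finset.prod_pow_eq_pow_sum, mul_comm]

/-- The sum of the absolute values of the numbers `c_α ∏ α_i!`, where `c_α` are the coefficients of
a polynomial. -/
def factorialNorm (F : MvPolynomial (Fin n) ℤ) : ℕ :=
  ∑ α ∈ F.support, (F.coeff α).natAbs * ∏ i, (α i).factorial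

/-- The number `∑ c_α ∏ α_i! β ^ (E - wt α)` with `E = (δ + 1) ^ n`. In its product with
`(∑ x_i β ^ (δ + 1) ^ i) ^ δ` the value of the form at `x`, multiplied by `δ!`, is the digit of
`β ^ E`. -/
def reversedForm {R : Type*} [CommRing R] (F : MvPolynomial (Fin n) ℤ) (δ : ℕ) (β : R) : R :=
  ∑ α ∈ F.support, (F.coeff α * ∏ i, (α i).factorial : ℤ) * β ^ ((δ + 1) ^ n - weight δ α)

theorem map_reversedForm {R R' : Type*} [CommRing R] [CommRing R'] (f : R →+* R')
    (F : MvPolynomial (Fin n) ℤ) (δ : ℕ) (β : R) :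
    f (reversedForm F δ β) = reversedForm F δ (f β) := by
  simp only [reversedForm, map_sum, map_mul, map_intCast, map_pow]

theorem sum_abs_coeff_mul_eq (F : MvPolynomial (Fin n) ℤ) :
    ∑ α ∈ F.support, |F.coeff α * ∏ i, (α i).factorial| = (factorialNorm F : ℤ) := by
  simp [factorialNorm, abs_mul, Finset.abs_prod]

theorem abs_reversedForm_le (F : MvPolynomial (Fin n) ℤ) (δ : ℕ) {β : ℤ} (hβ : 1 ≤ β) :
    |reversedForm F δ β| ≤ factorialNorm F * β ^ (δ + 1) ^ n := by
  rw [← sum_abs_coeff_mul_eq, Finset.sum_mul]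
  refine (Finset.abs_sum_le_sum_abs _ _).trans (Finset.sum_le_sum fun α _ ↦ ?_)
  rw [abs_mul, abs_of_nonneg (a := β ^ _) (by positivity), Int.cast_id]
  gcongr
  exact Nat.sub_le _ _

theorem exists_sum_mul_pow_eq {ι : Type*} (s : Finset ι) (c : ι → ℤ) (e : ι → ℕ) (E : ℕ) {β : ℤ}
    (hβ : 1 ≤ β) :
    ∃ L H : ℤ, ∑ i ∈ s, c i * β ^ e i =
        L + (∑ i ∈ s with e i = E, c i) * β ^ E + H * β ^ (E + 1) ∧
      |L| * β ≤ (∑ i ∈ s, |c i|) * β ^ E := by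
  have hterm (i : ι) : ∃ L H : ℤ, c i * β ^ e i =
      L + (if e i = E then c i else 0) * β ^ E + H * β ^ (E + 1) ∧ |L| * β ≤ |c i| * β ^ E := by
    rcases lt_trichotomy (e i) E with h | h | h
    · refine ⟨c i * β ^ e i, 0, by simp [h.ne], ?_⟩
      rw [abs_mul, abs_of_nonneg (a := β ^ _) (by positivity), mul_assoc, ← pow_succ]
      gcongr
      exact h
    · exact ⟨0, 0, by simp [h], by simpa using by positivity⟩
    · refine ⟨0, c i * β ^ (e i - (E + 1)), ?_, by simpa using by positivity⟩
      rw [if_neg h.ne', mul_assoc, ← pow_add, Nat.sub_add_cancel h]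
      ring
  choose L H hsum hL using hterm
  refine ⟨∑ i ∈ s, L i, ∑ i ∈ s, H i, ?_, ?_⟩
  · simp only [hsum, Finset.sum_filter, Finset.sum_add_distrib, Finset.sum_mul]
  · rw [Finset.sum_mul]
    refine (mul_le_mul_of_nonneg_right (Finset.abs_sum_le_sum_abs _ _) (by linarith)).trans ?_
    rw [Finset.sum_mul]
    exact Finset.sum_le_sum fun i _ ↦ hL i

/-- The coefficient contributed by a pair of exponent vectors to the product of `reversedForm` and
the `δ`-th power of a linear form with coefficients `x`. -/
def productCoeff (F : MvPolynomial (Fin n) ℤ) (x : Fin n → ℤ)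
    (p : (Fin n →₀ ℕ) × (Fin n → ℕ)) : ℤ :=
  F.coeff p.1 * (∏ i, (p.1 i).factorial : ℕ) *
    (Nat.multinomial Finset.univ p.2 * ∏ i, x i ^ p.2 i)

theorem reversedForm_mul_eq_sum (F : MvPolynomial (Fin n) ℤ) (δ : ℕ) (x : Fin n → ℤ) (β : ℤ) :
    reversedForm F δ β * (∑ i, x i * β ^ (δ + 1) ^ (i : ℕ)) ^ δ =
      ∑ p ∈ F.support ×ˢ Finset.piAntidiag Finset.univ δ,
        productCoeff F x p * β ^ ((δ + 1) ^ n - weight δ p.1 + weight δ p.2) := by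
  rw [sum_mul_pow_pow_eq, reversedForm, Finset.sum_mul_sum, Finset.sum_product]
  refine Finset.sum_congr rfl fun α _ ↦ Finset.sum_congr rfl fun α' _ ↦ ?_
  rw [pow_add, productCoeff, Int.cast_id]
  ring

theorem sum_productCoeff_filter_eq {F : MvPolynomial (Fin n) ℤ} {δ : ℕ} (hF : F.IsHomogeneous δ)
    (x : Fin n → ℤ) :
    ∑ p ∈ F.support ×ˢ Finset.piAntidiag Finset.univ δ with
        (δ + 1) ^ n - weight δ p.1 + weight δ p.2 = (δ + 1) ^ n, productCoeff F x p =
      δ.factorial * eval x F := by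
  set B := Finset.piAntidiag (Finset.univ : Finset (Fin n)) δ
  have hB {α : Fin n → ℕ} : α ∈ B ↔ ∑ i, α i = δ := by simp [B]
  have hle {α : Fin n → ℕ} (hα : α ∈ B) (i : Fin n) : α i ≤ δ :=
    (Finset.single_le_sum (fun _ _ ↦ Nat.zero_le _) (Finset.mem_univ i)).trans_eq (hB.1 hα)
  rw [Finset.sum_filter, Finset.sum_product, eval_eq', Finset.mul_sum]
  refine Finset.sum_congr rfl fun α hα ↦ ?_
  have hαB : ⇑α ∈ B := by
    rw [hB, ← Finsupp.degree_eq_sum]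
    by_contra hdeg
    exact mem_support_iff.1 hα (hF.coeff_eq_zero hdeg)
  have hiff {α' : Fin n → ℕ} (hα' : α' ∈ B) :
      (δ + 1) ^ n - weight δ α + weight δ α' = (δ + 1) ^ n ↔ ⇑α = α' := by
    rw [← weight_inj (hle hαB) (hle hα')]
    have := weight_lt (hle hαB)
    omega
  have hspec := Nat.multinomial_spec Finset.univ α
  rw [hB.1 hαB] at hspec
  rw [Finset.sum_congr rfl fun α' hα' ↦ if_congr (hiff hα') rfl rfl, Finset.sum_ite_eq,
    if_pos hαB, ← hspec, productCoeff, Nat.cast_mul]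
  ring

theorem sum_abs_productCoeff_eq (F : MvPolynomial (Fin n) ℤ) (δ : ℕ) {x : Fin n → ℤ}
    (hx : ∀ i, 0 ≤ x i) :
    ∑ p ∈ F.support ×ˢ Finset.piAntidiag Finset.univ δ, |productCoeff F x p| =
      factorialNorm F * (∑ i, x i) ^ δ := by
  have hm (α : Fin n → ℕ) : 0 ≤ Nat.multinomial Finset.univ α * ∏ i, x i ^ α i :=
    mul_nonneg (Int.natCast_nonneg _) (Finset.prod_nonneg fun i _ ↦ pow_nonneg (hx i) _)
  rw [← sum_abs_coeff_mul_eq, Finset.sum_pow_eq_sum_piAntidiag, Finset.sum_mul_sum,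
    Finset.sum_product]
  refine Finset.sum_congr rfl fun α _ ↦ Finset.sum_congr rfl fun α' _ ↦ ?_
  rw [productCoeff, abs_mul, abs_of_nonneg (hm _)]

theorem exists_reversedForm_mul_eq {F : MvPolynomial (Fin n) ℤ} {δ : ℕ} (hF : F.IsHomogeneous δ)
    {x : Fin n → ℤ} (hx : ∀ i, 0 ≤ x i) {β : ℤ} (hβ : 1 ≤ β) :
    ∃ L H : ℤ, reversedForm F δ β * (∑ i, x i * β ^ (δ + 1) ^ (i : ℕ)) ^ δ =
        L + δ.factorial * eval x F * β ^ (δ + 1) ^ n + H * β ^ ((δ + 1) ^ n + 1) ∧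
      |L| * β ≤ factorialNorm F * (∑ i, x i) ^ δ * β ^ (δ + 1) ^ n ∧
      |δ.factorial * eval x F| ≤ factorialNorm F * (∑ i, x i) ^ δ := by
  obtain ⟨L, H, hsum, hL⟩ := exists_sum_mul_pow_eq
    (F.support ×ˢ Finset.piAntidiag Finset.univ δ) (productCoeff F x)
    (fun p ↦ (δ + 1) ^ n - weight δ p.1 + weight δ p.2) ((δ + 1) ^ n) hβ
  rw [← reversedForm_mul_eq_sum, sum_productCoeff_filter_eq hF] at hsum
  rw [sum_abs_productCoeff_eq F δ hx] at hL
  refine ⟨L, H, hsum, hL, ?_⟩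
  rw [← sum_productCoeff_filter_eq hF, ← sum_abs_productCoeff_eq F δ hx]
  exact (Finset.abs_sum_le_sum_abs _ _).trans
    (Finset.sum_le_sum_of_subset_of_nonneg (Finset.filter_subset _ _) fun _ _ _ ↦ abs_nonneg _)

theorem div_pow_mod_eq_zero_iff {β E K : ℕ} {L D H : ℤ}
    (hK : (K : ℤ) = L + D * β ^ E + H * β ^ (E + 1)) (hL0 : 0 ≤ L) (hL : L < β ^ E)
    (hD : |D| < β) : K / β ^ E % β = 0 ↔ D = 0 := by
  have hdiv : ((K / β ^ E : ℕ) : ℤ) = D + β * H := by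
    push_cast
    rw [hK, show L + D * β ^ E + H * β ^ (E + 1) = L + β ^ E * (D + β * H) by ring,
      Int.add_mul_ediv_left _ _ (hL0.trans_lt hL).ne', Int.ediv_eq_zero_of_lt hL0 hL, zero_add]
  rw [← Nat.dvd_iff_mod_eq_zero, ← Int.natCast_dvd_natCast, hdiv,
    Int.dvd_add_left (dvd_mul_right _ _)]
  exact ⟨fun h ↦ Int.eq_zero_of_abs_lt_dvd h hD, fun h ↦ h ▸ dvd_zero _⟩

end Forms

/-! ### Coding the zeros of a form by a single number -/

/-- The data from which the number `code` is formed: a form of degree `deg` in `ν + 2` variables,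
a value `a`, a bound `b` for the unknowns, and a number `g` meant to have the unknowns among its
digits. If `b` is a power of two, the binary expansion of `code` tells whether
`g = ∑ z_i β ^ (deg + 1) ^ (i + 2)` for numbers `z_i < b` such that `(1, a, z)` is a zero of the
form. -/
structure ZeroCode (ν : ℕ) (R : Type*) where
  form : MvPolynomial (Fin (ν + 2)) ℤ
  deg : ℕ
  a : R
  b : R
  g : R

namespace ZeroCode

variable {ν : ℕ}

section Polynomials

variable {R R' : Type*}

/-- The image of a code under a map of its entries. -/
@[simps]
def map (f : R → R') (p : ZeroCode ν R) : ZeroCode ν R' := ⟨p.form, p.deg, f p.a, f p.b, f p.g⟩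

/-- A constant with `κ b ^ deg` at least four times the coefficients that arise. -/
def κ (p : ZeroCode ν R) : ℕ := 4 * factorialNorm p.form * (ν + 2) ^ p.deg

/-- The exponent of `β` whose digit is the value of the form; it also bounds the number of digits
of `g`. -/
def r (p : ZeroCode ν R) : ℕ := (p.deg + 1) ^ (ν + 2)

/-- An exponent with `β ^ s` larger than the other terms of `K`. -/
def s (p : ZeroCode ν R) : ℕ := (p.r + 2) * (p.deg + 1)

theorem deg_lt_r (p : ZeroCode ν R) : p.deg < p.r := Nat.le_self_pow (Nat.succ_ne_zero _) _

theorem succ_r_lt_s (p : ZeroCode ν R) : p.r + 1 < p.s := by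
  unfold s
  nlinarith [p.deg.zero_le]

variable [CommRing R] [CommRing R'] (p : ZeroCode ν R)

/-- Half of the base `β`. -/
def halfBase : R := 2 ^ (p.κ + 1) * p.b ^ (p.deg + 1)

/-- The base `β` of the digits. -/
def base : R := 2 * p.halfBase

/-- In a solution this is `∑ x_i β ^ (deg + 1) ^ i` with `x = (1, a, z)`. -/
def c : R := p.base + p.a * p.base ^ (p.deg + 1) + p.g

/-- The product whose digit of `β ^ r` is the value of the form, up to a factorial. The term
`β ^ r / 2` makes the part below `β ^ r` positive, and the term `β ^ s` the whole number. -/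
def K : R := reversedForm p.form p.deg p.base * p.c ^ p.deg +
  p.halfBase * p.base ^ (p.r - 1) + p.base ^ p.s

/-- The mask of the numbers `∑ z_i β ^ (deg + 1) ^ (i + 2)` with `z_i < b`. -/
def mask : R := ∑ i : Fin ν, (p.b - 1) * p.base ^ (p.deg + 1) ^ (i + 2 : ℕ)

/-- The complement of `mask`. -/
def coMask : R := p.base ^ p.r - 1 - p.mask

/-- The mask of the digit of `β ^ r`. -/
def digitMask : R := (p.base - 1) * p.base ^ p.r

/-- A bound for the numbers to be masked. -/
def N : R := p.base ^ (p.s + 1)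

/-- The number whose binary expansion describes the zeros of the form. -/
def code : R := maskCode p.N p.g p.coMask + (2 * p.N) ^ 3 * maskCode p.N p.K p.digitMask

theorem two_mul_halfBase_mul_eq : 2 * (p.halfBase * p.base ^ (p.r - 1)) = p.base ^ p.r := by
  have hr : 1 ≤ p.r := Nat.one_le_pow _ _ p.deg.succ_pos
  rw [← mul_assoc, ← base, ← pow_succ', Nat.sub_add_cancel hr]

variable (f : R →+* R')

theorem map_halfBase : (p.map f).halfBase = f p.halfBase := by simp [halfBase, κ, map_ofNat]

theorem map_base : (p.map f).base = f p.base := by simp [base, map_halfBase, map_ofNat]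

theorem map_N : (p.map f).N = f p.N := by simp [N, map_base, s, r]

theorem map_code : (p.map f).code = f p.code := by
  simp [code, coMask, mask, digitMask, K, c, map_maskCode, map_N, map_base, map_halfBase,
    map_reversedForm, s, r, map_ofNat]

end Polynomials

/-- The bounds on `a` and `g` that hold in a solution, together with the positivity of the
degree. -/
structure IsBounded (p : ZeroCode ν ℤ) : Prop where
  one_le_deg : 1 ≤ p.deg
  a_nonneg : 0 ≤ p.a
  a_lt_b : p.a < p.b
  g_nonneg : 0 ≤ p.g
  g_lt : p.g < p.base ^ p.r

namespace IsBounded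

variable {p : ZeroCode ν ℤ}

theorem one_le_b (hp : p.IsBounded) : 1 ≤ p.b := by linarith [hp.a_nonneg, hp.a_lt_b]

theorem mul_pow_le_base (hp : p.IsBounded) : 4 * (p.κ * p.b ^ p.deg) ≤ p.base := by
  have hb := hp.one_le_b
  calc 4 * (p.κ * p.b ^ p.deg) ≤ 4 * (2 ^ p.κ * p.b ^ p.deg) := by
        gcongr
        exact_mod_cast p.κ.lt_two_pow_self.le
    _ ≤ 4 * (2 ^ p.κ * p.b ^ (p.deg + 1)) := by
        gcongr
        exact Nat.le_succ _
    _ = p.base := by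
        rw [base, halfBase]
        ring

theorem four_mul_b_le_base (hp : p.IsBounded) : 4 * p.b ≤ p.base := by
  have hb := hp.one_le_b
  calc 4 * p.b = 2 * (2 * p.b) := by ring
    _ ≤ 2 * (2 ^ (p.κ + 1) * p.b ^ (p.deg + 1)) := by
      gcongr
      · exact le_self_pow₀ one_le_two p.κ.succ_ne_zero
      · exact le_self_pow₀ hb p.deg.succ_ne_zero
    _ = p.base := rfl

theorem four_le_base (hp : p.IsBounded) : 4 ≤ p.base := by
  linarith [hp.one_le_b, hp.four_mul_b_le_base]

theorem factorialNorm_le_base (hp : p.IsBounded) : factorialNorm p.form ≤ p.base := by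
  have hb : 1 ≤ p.b ^ p.deg := one_le_pow₀ hp.one_le_b
  have hν : 1 ≤ ((ν : ℤ) + 2) ^ p.deg := one_le_pow₀ (by omega)
  calc (factorialNorm p.form : ℤ) = 1 * (1 * factorialNorm p.form * 1 * 1) := by ring
    _ ≤ 4 * (4 * factorialNorm p.form * (ν + 2) ^ p.deg * p.b ^ p.deg) := by gcongr <;> norm_num
    _ ≤ p.base := by
      convert hp.mul_pow_le_base using 3
      simp [κ]

theorem strictMono (hp : p.IsBounded) : StrictMono fun i : ℕ ↦ (p.deg + 1) ^ (i + 2) :=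
  (pow_right_strictMono₀ (Nat.lt_add_of_pos_left hp.one_le_deg)).comp
    fun _ _ h ↦ Nat.add_lt_add_right h 2

theorem mask_nonneg (hp : p.IsBounded) : 0 ≤ p.mask := by
  have := hp.one_le_b
  have := hp.four_le_base
  exact Finset.sum_nonneg fun i _ ↦ mul_nonneg (by linarith) (by positivity)

theorem mask_lt (hp : p.IsBounded) : p.mask < p.base ^ p.r := by
  have := hp.one_le_b
  have := hp.four_mul_b_le_base
  exact sum_mul_pow_lt (z := fun _ : Fin ν ↦ p.b - 1) hp.strictMono (fun _ ↦ by linarith)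
    (fun _ ↦ by linarith) (by linarith)

theorem pow_r_le_N (hp : p.IsBounded) : p.base ^ p.r ≤ p.N :=
  pow_le_pow_right₀ (by linarith [hp.four_le_base]) (by linarith [p.succ_r_lt_s])

theorem g_lt_N (hp : p.IsBounded) : p.g < p.N := hp.g_lt.trans_le hp.pow_r_le_N

theorem coMask_nonneg (hp : p.IsBounded) : 0 ≤ p.coMask := by
  unfold coMask
  linarith [Int.add_one_le_of_lt hp.mask_lt]

theorem coMask_lt_N (hp : p.IsBounded) : p.coMask < p.N := by
  unfold coMask
  linarith [hp.mask_nonneg, hp.pow_r_le_N]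

theorem b_le_digitMask (hp : p.IsBounded) : p.b ≤ p.digitMask := by
  have hβ := hp.four_mul_b_le_base
  have hb := hp.one_le_b
  calc p.b ≤ p.base - 1 := by linarith
    _ ≤ p.digitMask := le_mul_of_one_le_right (by linarith) (one_le_pow₀ (by linarith))

theorem digitMask_lt_N (hp : p.IsBounded) : p.digitMask < p.N := by
  have hβ := hp.four_le_base
  calc p.digitMask < p.base * p.base ^ p.r := by
        unfold digitMask
        gcongr
        exact sub_one_lt _
    _ = p.base ^ (p.r + 1) := (pow_succ' _ _).symm
    _ ≤ p.N := pow_le_pow_right₀ (by linarith) (by linarith [p.succ_r_lt_s])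

theorem c_nonneg (hp : p.IsBounded) : 0 ≤ p.c := by
  have := hp.four_le_base
  have := hp.a_nonneg
  have := hp.g_nonneg
  unfold c
  positivity

theorem c_le (hp : p.IsBounded) : p.c ≤ p.base ^ (p.r + 2) := by
  have hβ := hp.four_le_base
  have h1 : p.base ^ 1 ≤ p.base ^ (p.r + 1) := pow_le_pow_right₀ (by linarith) (by omega)
  have h2 : p.a * p.base ^ (p.deg + 1) ≤ p.base * p.base ^ p.r := by
    gcongr
    · linarith [hp.a_lt_b, hp.four_mul_b_le_base, hp.a_nonneg]
    · linarith
    · exact p.deg_lt_r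
  have h3 : p.base ^ p.r ≤ p.base ^ (p.r + 1) := pow_le_pow_right₀ (by linarith) (by omega)
  have h4 : 4 * p.base ^ (p.r + 1) ≤ p.base ^ (p.r + 2) := by
    rw [pow_succ' _ (p.r + 1)]
    gcongr
  rw [← pow_succ'] at h2
  unfold c
  linarith [hp.g_lt, pow_pos (by linarith : 0 < p.base) (p.r + 1)]

theorem abs_reversedForm_mul_le (hp : p.IsBounded) :
    |reversedForm p.form p.deg p.base * p.c ^ p.deg| ≤ p.base ^ (p.s - 1) := by
  have hβ := hp.four_le_base
  have hc := hp.c_nonneg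
  rw [abs_mul, abs_of_nonneg (pow_nonneg hc _)]
  calc _ ≤ factorialNorm p.form * p.base ^ p.r * p.c ^ p.deg := by
        gcongr
        exact abs_reversedForm_le _ _ (by linarith)
    _ ≤ p.base * p.base ^ p.r * (p.base ^ (p.r + 2)) ^ p.deg := by
        gcongr
        · exact hp.factorialNorm_le_base
        · exact hp.c_le
    _ = p.base ^ (p.s - 1) := by
        rw [← pow_succ', ← pow_mul, ← pow_add, s, mul_add_one]
        congr 1
        omega

theorem two_mul_abs_K_sub_le (hp : p.IsBounded) : 2 * |p.K - p.base ^ p.s| ≤ p.base ^ p.s := by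
  have hβ := hp.four_le_base
  have hs : p.base ^ p.s = p.base * p.base ^ (p.s - 1) := by
    rw [← pow_succ', Nat.sub_add_cancel (by linarith [p.succ_r_lt_s])]
  have hr : p.base ^ p.r ≤ p.base ^ (p.s - 1) :=
    pow_le_pow_right₀ (by linarith) (by have := p.succ_r_lt_s; omega)
  have hD := abs_le.1 hp.abs_reversedForm_mul_le
  have h0 : 0 < p.base ^ p.r := pow_pos (by linarith) _
  have h4 : 4 * p.base ^ (p.s - 1) ≤ p.base ^ p.s := by
    rw [hs]
    gcongr
  have habs : |p.K - p.base ^ p.s| ≤ 2 * p.base ^ (p.s - 1) := by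
    rw [K, add_sub_cancel_right, abs_le]
    constructor <;> linarith [p.two_mul_halfBase_mul_eq]
  linarith

theorem K_nonneg (hp : p.IsBounded) : 0 ≤ p.K := by
  have := hp.two_mul_abs_K_sub_le
  have := neg_abs_le (p.K - p.base ^ p.s)
  have : 0 < p.base ^ p.s := pow_pos (by linarith [hp.four_le_base]) _
  linarith

theorem K_lt_N (hp : p.IsBounded) : p.K < p.N := by
  have hβ := hp.four_le_base
  have h0 : 0 < p.base ^ p.s := pow_pos (by linarith) _
  have := hp.two_mul_abs_K_sub_le
  have := le_abs_self (p.K - p.base ^ p.s)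
  calc p.K < 4 * p.base ^ p.s := by linarith
    _ ≤ p.base * p.base ^ p.s := by gcongr
    _ = p.N := (pow_succ' _ _).symm

theorem b_le_code (hp : p.IsBounded) : p.b ≤ p.code := by
  have hN : 1 ≤ (2 * p.N) ^ 3 := one_le_pow₀ (by linarith [hp.g_nonneg, hp.g_lt_N])
  have hb := hp.one_le_b
  have h1 := le_maskCode hp.g_nonneg hp.g_lt_N hp.coMask_nonneg hp.coMask_lt_N
  have h2 := le_maskCode hp.K_nonneg hp.K_lt_N (by linarith [hp.b_le_digitMask]) hp.digitMask_lt_N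
  calc p.b ≤ 0 + 1 * maskCode p.N p.K p.digitMask := by linarith [hp.b_le_digitMask]
    _ ≤ p.code := add_le_add (hp.coMask_nonneg.trans h1)
      (mul_le_mul_of_nonneg_right hN (by linarith [hp.b_le_digitMask]))

end IsBounded

variable {p : ZeroCode ν ℤ}

theorem c_eq_sum {z : Fin ν → ℤ} (hg : p.g = ∑ i, z i * p.base ^ (p.deg + 1) ^ (i + 2 : ℕ)) :
    p.c = ∑ i, (Fin.cons 1 (Fin.cons p.a z) : Fin (ν + 2) → ℤ) i *
      p.base ^ (p.deg + 1) ^ (i : ℕ) := by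
  simp [Fin.sum_univ_succ, c, hg, add_assoc]

theorem sum_cons_cons_le {a b : ℤ} (hb : 1 ≤ b) (ha : a ≤ b) {z : Fin ν → ℤ} (hz : ∀ i, z i ≤ b) :
    ∑ i, (Fin.cons 1 (Fin.cons a z) : Fin (ν + 2) → ℤ) i ≤ (ν + 2) * b := by
  have hle : ∀ i, (Fin.cons 1 (Fin.cons a z) : Fin (ν + 2) → ℤ) i ≤ b :=
    Fin.cases hb (Fin.cases ha hz)
  have h := Finset.sum_le_card_nsmul Finset.univ _ b fun i _ ↦ hle i
  rw [Finset.card_univ, Fintype.card_fin, nsmul_eq_mul] at h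
  exact_mod_cast h

theorem IsBounded.four_mul_factorialNorm_mul_le (hp : p.IsBounded) {z : Fin ν → ℤ}
    (hz0 : ∀ i, 0 ≤ z i) (hz : ∀ i, z i < p.b) :
    4 * (factorialNorm p.form *
      (∑ i, (Fin.cons 1 (Fin.cons p.a z) : Fin (ν + 2) → ℤ) i) ^ p.deg) ≤ p.base := by
  have hx0 : ∀ i, 0 ≤ (Fin.cons 1 (Fin.cons p.a z) : Fin (ν + 2) → ℤ) i :=
    Fin.cases zero_le_one (Fin.cases hp.a_nonneg hz0)
  calc _ ≤ 4 * (factorialNorm p.form * ((ν + 2) * p.b) ^ p.deg) := by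
        gcongr
        · exact Finset.sum_nonneg fun i _ ↦ hx0 i
        · exact sum_cons_cons_le hp.one_le_b hp.a_lt_b.le fun i ↦ (hz i).le
    _ = p.κ * p.b ^ p.deg := by
        rw [κ, mul_pow]
        push_cast
        ring
    _ ≤ p.base := by
        have := mul_nonneg p.κ.cast_nonneg (pow_nonneg (hp.one_le_b.trans' zero_le_one) p.deg)
        linarith [hp.mul_pow_le_base]

theorem IsBounded.exists_K_eq (hp : p.IsBounded) (hF : p.form.IsHomogeneous p.deg)
    {z : Fin ν → ℤ} (hz0 : ∀ i, 0 ≤ z i) (hz : ∀ i, z i < p.b)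
    (hg : p.g = ∑ i, z i * p.base ^ (p.deg + 1) ^ (i + 2 : ℕ)) :
    ∃ L D H : ℤ, p.K = L + D * p.base ^ p.r + H * p.base ^ (p.r + 1) ∧
      0 ≤ L ∧ L < p.base ^ p.r ∧ |D| < p.base ∧
      (D = 0 ↔ MvPolynomial.eval (Fin.cons 1 (Fin.cons p.a z)) p.form = 0) := by
  have h4 := hp.four_le_base
  have hr0 : 0 < p.base ^ p.r := pow_pos (by linarith) _
  have hhalf := p.two_mul_halfBase_mul_eq
  have hx := hp.four_mul_factorialNorm_mul_le hz0 hz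
  have hx0 : ∀ i, 0 ≤ (Fin.cons 1 (Fin.cons p.a z) : Fin (ν + 2) → ℤ) i :=
    Fin.cases zero_le_one (Fin.cases hp.a_nonneg hz0)
  obtain ⟨L, H, hsum, hL, hD⟩ := exists_reversedForm_mul_eq hF hx0 (by linarith : 1 ≤ p.base)
  rw [← c_eq_sum hg] at hsum
  change |L| * p.base ≤ _ * p.base ^ p.r at hL
  have hL4 : 4 * |L| ≤ p.base ^ p.r := by
    refine le_of_mul_le_mul_right (a := p.base) ?_ (by linarith)
    linarith [mul_le_mul_of_nonneg_right hx hr0.le]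
  have hs : p.base ^ p.s = p.base ^ (p.s - (p.r + 1)) * p.base ^ (p.r + 1) := by
    rw [← pow_add, Nat.sub_add_cancel p.succ_r_lt_s.le]
  have hL' := abs_le.1 (le_refl |L|)
  refine ⟨L + p.halfBase * p.base ^ (p.r - 1), _, H + p.base ^ (p.s - (p.r + 1)), ?_,
    by linarith, by linarith, hD.trans_lt (by linarith),
    mul_eq_zero_iff_left (by exact_mod_cast p.deg.factorial_ne_zero)⟩
  rw [K, hsum, hs]
  unfold r
  ring

theorem exists_base_eq_two_pow {j : ℕ} (hb : p.b = 2 ^ j) : ∃ q, j ≤ q ∧ p.base = 2 ^ q := by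
  refine ⟨p.κ + 2 + j * (p.deg + 1), by nlinarith [p.deg.zero_le], ?_⟩
  rw [base, halfBase, hb]
  ring

theorem IsBounded.and_coMask_eq_zero_iff (hp : p.IsBounded) {j : ℕ} (hb : p.b = 2 ^ j) {g M : ℕ}
    (hg : p.g = g) (hM : p.coMask = M) :
    g &&& M = 0 ↔ ∃ z : Fin ν → ℕ, (∀ i, (z i : ℤ) < p.b) ∧
      p.g = ∑ i, z i * p.base ^ (p.deg + 1) ^ (i + 2 : ℕ) := by
  obtain ⟨q, hjq, hβ⟩ := exists_base_eq_two_pow hb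
  obtain ⟨m, hm⟩ := Int.eq_ofNat_of_zero_le hp.mask_nonneg
  have hpow : p.base ^ p.r = (2 ^ (q * p.r) : ℕ) := by
    rw [hβ, ← pow_mul]
    norm_cast
  have hlt_g := hp.g_lt
  have hlt_m := hp.mask_lt
  have hle := hp.coMask_nonneg
  rw [coMask, hpow, hm] at hM hle
  rw [hpow] at hlt_g hlt_m
  have hsum : m = ∑ i : Fin ν, (2 ^ j - 1) * (2 ^ q) ^ (p.deg + 1) ^ (i + 2 : ℕ) := by
    zify [Nat.one_le_two_pow (n := j)]
    rw [← hm, mask, hβ, hb]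
  rw [show M = 2 ^ (q * p.r) - 1 - m by omega,
    and_two_pow_sub_one_sub_eq_zero_iff (by omega) (by omega), hsum,
    isSubmask_sum_iff hjq hp.strictMono, hg, hb, hβ]
  norm_cast

theorem IsBounded.and_digitMask_eq_zero_iff (hp : p.IsBounded) (hF : p.form.IsHomogeneous p.deg)
    {j : ℕ} (hb : p.b = 2 ^ j) {K T : ℕ} (hK : p.K = K) (hT : p.digitMask = T) {z : Fin ν → ℤ}
    (hz0 : ∀ i, 0 ≤ z i) (hz : ∀ i, z i < p.b)
    (hg : p.g = ∑ i, z i * p.base ^ (p.deg + 1) ^ (i + 2 : ℕ)) :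
    K &&& T = 0 ↔ MvPolynomial.eval (Fin.cons 1 (Fin.cons p.a z)) p.form = 0 := by
  obtain ⟨q, -, hβ⟩ := exists_base_eq_two_pow hb
  obtain ⟨L, D, H, hKeq, hL0, hL, hD, hiff⟩ := hp.exists_K_eq hF hz0 hz hg
  have hTeq : T = (2 ^ q - 1) * 2 ^ (q * p.r) := by
    zify [Nat.one_le_two_pow (n := q)]
    rw [← hT, digitMask, hβ, pow_mul]
  have hβ' : p.base = (2 ^ q : ℕ) := by exact_mod_cast hβ
  rw [hK, hβ'] at hKeq
  rw [hβ'] at hL hD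
  rw [hTeq, and_two_pow_sub_one_mul_two_pow_eq_zero_iff, ← hiff, pow_mul]
  exact div_pow_mod_eq_zero_iff hKeq hL0 hL hD

theorem IsBounded.exists_code_eq (hp : p.IsBounded) (hF : p.form.IsHomogeneous p.deg) {j : ℕ}
    (hb : p.b = 2 ^ j) :
    ∃ X : ℕ, p.code = X ∧ (p.N ^ 4 ∣ X.centralBinom ↔ ∃ z : Fin ν → ℕ,
      (∀ i, (z i : ℤ) < p.b) ∧ p.g = ∑ i, z i * p.base ^ (p.deg + 1) ^ (i + 2 : ℕ) ∧
        MvPolynomial.eval (Fin.cons 1 (Fin.cons p.a fun i ↦ (z i : ℤ))) p.form = 0) := by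
  obtain ⟨q, -, hβ⟩ := exists_base_eq_two_pow hb
  obtain ⟨g, hg⟩ := Int.eq_ofNat_of_zero_le hp.g_nonneg
  obtain ⟨K, hK⟩ := Int.eq_ofNat_of_zero_le hp.K_nonneg
  obtain ⟨M, hM⟩ := Int.eq_ofNat_of_zero_le hp.coMask_nonneg
  obtain ⟨T, hT⟩ := Int.eq_ofNat_of_zero_le
    (zero_le_one.trans (hp.one_le_b.trans hp.b_le_digitMask))
  have hN : p.N = 2 ^ (q * (p.s + 1)) := by rw [N, hβ, ← pow_mul]
  have hlt_g := hp.g_lt_N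
  have hlt_M := hp.coMask_lt_N
  have hlt_K := hp.K_lt_N
  have hlt_T := hp.digitMask_lt_N
  simp only [hN, hg, hM, hK, hT] at hlt_g hlt_M hlt_K hlt_T
  obtain ⟨X, hX, hdvd⟩ := exists_maskCode_add_maskCode_eq (k := q * (p.s + 1))
    (by exact_mod_cast hlt_g) (by exact_mod_cast hlt_M) (by exact_mod_cast hlt_K)
    (by exact_mod_cast hlt_T)
  refine ⟨X, by rw [code, hN, hg, hM, hK, hT, hX], ?_⟩
  have hNdvd : p.N ^ 4 ∣ X.centralBinom ↔ (2 ^ (q * (p.s + 1))) ^ 4 ∣ X.centralBinom := by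
    rw [hN]
    norm_cast
  rw [hNdvd, hdvd, hp.and_coMask_eq_zero_iff hb hg hM, ← exists_and_right]
  refine exists_congr fun z ↦ ?_
  rw [and_assoc]
  exact and_congr_right fun hz ↦ and_congr_right fun hsum ↦
    hp.and_digitMask_eq_zero_iff hF hb hK hT (fun _ ↦ Int.natCast_nonneg _) hz hsum

end ZeroCode

/-! ### Combining the conditions into one equation -/

section Combination

variable {R : Type*} [CommRing R]

theorem exists_two_pow_eq_three_mul_add_one (k : ℕ) :
    ∃ c : ℤ, 2 ^ k = 3 * c + 1 ∨ -2 ^ k = 3 * c + 1 := by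
  induction k with
  | zero => exact ⟨0, by simp⟩
  | succ k ih =>
    obtain ⟨c, h | h⟩ := ih
    · exact ⟨-2 * c - 1, Or.inr (by rw [pow_succ, h]; ring)⟩
    · exact ⟨-2 * c - 1, Or.inl (by rw [pow_succ]; linarith)⟩

theorem exists_eq_two_mul_add_one_mul {v : ℤ} (hv : v ≠ 0) :
    ∃ s t : ℤ, v = (2 * s + 1) * (3 * t + 1) := by
  obtain ⟨m, hvm, hm⟩ :=
    (Int.finiteMultiplicity_iff (a := 2).2 ⟨by norm_num, hv⟩).exists_eq_pow_mul_and_not_dvd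
  obtain ⟨o, rfl⟩ := Int.not_even_iff_odd.1 fun h ↦ hm h.two_dvd
  obtain ⟨c, h | h⟩ := exists_two_pow_eq_three_mul_add_one (multiplicity 2 v)
  · exact ⟨o, c, by rw [hvm, h]; ring⟩
  · exact ⟨-o - 1, c, by rw [hvm, ← h]; ring⟩

/-- A number whose positivity implies `0 < r`, where `(2 s + 1) (3 t + 1)` is an arbitrary nonzero
integer. As `4 r - 2` is not a square, it can be made a square if `0 < r`. -/
def signFactor (B r s t : R) : R := (4 * r - 2) * (B * ((2 * s + 1) * (3 * t + 1))) ^ 2 + 1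

theorem signFactor_ne_zero (B r s t : ℤ) : signFactor B r s t ≠ 0 := by
  unfold signFactor
  generalize (B * ((2 * s + 1) * (3 * t + 1))) ^ 2 = u
  have : (4 * r - 2) * u + 1 = 2 * ((2 * r - 1) * u) + 1 := by ring
  omega

theorem pos_of_signFactor_pos {B r s t : ℤ} (hB : B ≠ 0) (h : 0 < signFactor B r s t) : 0 < r := by
  have hv : B * ((2 * s + 1) * (3 * t + 1)) ≠ 0 :=
    mul_ne_zero hB (mul_ne_zero (by omega) (by omega))
  have hsq := sq_pos_of_ne_zero hv
  by_contra hr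
  unfold signFactor at h
  nlinarith

theorem isCoprime_signFactor_mul (A B r s t : R) : IsCoprime A (signFactor (A * B) r s t) :=
  ⟨-((4 * r - 2) * A * (B * ((2 * s + 1) * (3 * t + 1))) ^ 2), 1, by
    unfold signFactor
    ring⟩

theorem exists_isSquare_signFactor {B r : ℤ} (hB : B ≠ 0) (hr : 0 < r) :
    ∃ s t, IsSquare (signFactor B r s t) := by
  have hnsq : ¬ IsSquare (4 * r - 2) := by
    rintro ⟨y, hy⟩
    obtain ⟨c, rfl | rfl⟩ := Int.even_or_odd' y <;> ring_nf at hy <;> omega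
  obtain ⟨v, hv, hsq⟩ := exists_isSquare_mul_sq_add_one (by linarith) hnsq hB
  obtain ⟨s, t, rfl⟩ := exists_eq_two_mul_add_one_mul hv
  exact ⟨s, t, hsq⟩

/-- The product of the four numbers `S n - T - S (± √p ± (p ^ 2 + 1) √A)`. -/
def sqrtProduct (p A S T n : R) : R :=
  ((S * n - T) ^ 2 - S ^ 2 * (p + (p ^ 2 + 1) ^ 2 * A)) ^ 2 -
    4 * S ^ 4 * (p ^ 2 + 1) ^ 2 * p * A

theorem exists_sqrtProduct_eq_zero {p A S T : ℤ} (hp : IsSquare p) (hA : IsSquare A)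
    (hST : S ∣ T) : ∃ n, sqrtProduct p A S T n = 0 := by
  obtain ⟨q, rfl⟩ := hp
  obtain ⟨a, rfl⟩ := hA
  obtain ⟨c, rfl⟩ := hST
  refine ⟨c + q + ((q * q) ^ 2 + 1) * a, ?_⟩
  unfold sqrtProduct
  ring

theorem pos_of_sqrtProduct_eq_zero {p A S T n : ℤ} (hp : p ≠ 0) (hA : 0 < A) (hS : S ≠ 0)
    (h : sqrtProduct p A S T n = 0) : 0 < p := by
  unfold sqrtProduct at h
  refine hp.lt_or_gt.resolve_left fun hneg ↦ ?_
  have hcoef : 0 < 4 * S ^ 4 * (p ^ 2 + 1) ^ 2 := by positivity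
  nlinarith [mul_neg_of_pos_of_neg hcoef (mul_neg_of_neg_of_pos hneg hA)]

theorem isSquare_of_mul_sq_eq_sq {p r m : ℤ} (hr : r ≠ 0) (h : p * r ^ 2 = m ^ 2) :
    IsSquare p := by
  obtain ⟨k, rfl⟩ := (Int.pow_dvd_pow_iff two_ne_zero).1 (Dvd.intro_left _ h)
  exact ⟨k, mul_right_cancel₀ (pow_ne_zero 2 hr) (by rw [h]; ring)⟩

theorem exists_sq_eq_of_sqrtProduct_eq_zero {p A S T n : ℤ} (hS : S ≠ 0)
    (h : sqrtProduct p A S T n = 0) :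
    ∃ m r : ℤ, p * A = m ^ 2 ∧ r ^ 2 = p + (p ^ 2 + 1) ^ 2 * A + 2 * (p ^ 2 + 1) * m ∧
      S * n - T = S * r := by
  unfold sqrtProduct at h
  set M := p ^ 2 + 1
  set W := (S * n - T) ^ 2 - S ^ 2 * (p + M ^ 2 * A)
  have hM : M ≠ 0 := by positivity
  have hW : p * A * (2 * S ^ 2 * M) ^ 2 = W ^ 2 := by linarith
  obtain ⟨m, hm⟩ := (Int.pow_dvd_pow_iff two_ne_zero).1 (Dvd.intro_left _ hW)
  have hsq : (S * n - T) ^ 2 = S ^ 2 * (p + M ^ 2 * A + 2 * M * m) := by linarith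
  obtain ⟨r, hr⟩ := (Int.pow_dvd_pow_iff two_ne_zero).1 (Dvd.intro _ hsq.symm)
  refine ⟨m, r, ?_, ?_, hr⟩
  · have hcoef : 2 * S ^ 2 * M ≠ 0 := mul_ne_zero (mul_ne_zero two_ne_zero (pow_ne_zero 2 hS)) hM
    refine mul_right_cancel₀ (pow_ne_zero 2 hcoef) ?_
    rw [hW, hm]
    ring
  · refine mul_left_cancel₀ (pow_ne_zero 2 hS) ?_
    rw [← hsq, hr]
    ring

theorem of_sqrtProduct_eq_zero {p A S T n : ℤ} (hp : 0 < p) (hS : S ≠ 0)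
    (h : sqrtProduct p A S T n = 0) : IsSquare p ∧ IsSquare A ∧ S ∣ T := by
  obtain ⟨m, r, hm, hr, hST⟩ := exists_sq_eq_of_sqrtProduct_eq_zero hS h
  have hpr : p * r ^ 2 = (p + (p ^ 2 + 1) * m) ^ 2 := by
    linear_combination p * hr + (p ^ 2 + 1) ^ 2 * hm
  -- The weight `p ^ 2 + 1 > p` of `√A` prevents the cancellation of the two square roots.
  have hr0 : r ≠ 0 := by
    rintro rfl
    have hsum : p + (p ^ 2 + 1) * m = 0 := by
      rw [← sq_eq_zero_iff, ← hpr]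
      ring
    have hle := Int.le_of_dvd hp (⟨-m, by linarith⟩ : p ^ 2 + 1 ∣ p)
    nlinarith
  have hsq_p := isSquare_of_mul_sq_eq_sq hr0 hpr
  refine ⟨hsq_p, ?_, n - r, by linarith⟩
  obtain ⟨q, rfl⟩ := hsq_p
  exact isSquare_of_mul_sq_eq_sq (r := q) (by rintro rfl; simp at hp) (by rw [← hm]; ring)

/-- The left-hand side of an equation in the unknowns `s`, `t`, `n` that expresses that `A₁` and
`A₂` are squares, that `r` is positive and that `S` divides `T`. -/
def conjunctionPoly (A₁ A₂ r S T s t n : R) : R :=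
  sqrtProduct (A₁ * signFactor (A₁ * A₂) r s t) A₂ S T n

theorem map_conjunctionPoly {R' : Type*} [CommRing R'] (f : R →+* R') (A₁ A₂ r S T s t n : R) :
    f (conjunctionPoly A₁ A₂ r S T s t n) =
      conjunctionPoly (f A₁) (f A₂) (f r) (f S) (f T) (f s) (f t) (f n) := by
  simp [conjunctionPoly, sqrtProduct, signFactor, map_ofNat]

theorem exists_conjunctionPoly_eq_zero_iff {A₁ A₂ r S T : ℤ} (h₁ : 0 < A₁) (h₂ : 0 < A₂)
    (hS : S ≠ 0) : (∃ s t n, conjunctionPoly A₁ A₂ r S T s t n = 0) ↔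
      IsSquare A₁ ∧ IsSquare A₂ ∧ 0 < r ∧ S ∣ T := by
  have hA : A₁ * A₂ ≠ 0 := (mul_pos h₁ h₂).ne'
  constructor
  · rintro ⟨s, t, n, h⟩
    have hp := pos_of_sqrtProduct_eq_zero (mul_ne_zero h₁.ne' (signFactor_ne_zero _ r s t)) h₂ hS h
    obtain ⟨hsq, hsq₂, hdvd⟩ := of_sqrtProduct_eq_zero hp hS h
    have hsq₁ := isSquare_of_isCoprime_mul (isCoprime_signFactor_mul A₁ A₂ r s t) h₁ hsq
    exact ⟨hsq₁, hsq₂, pos_of_signFactor_pos hA (pos_of_mul_pos_right hp h₁.le), hdvd⟩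
  · rintro ⟨hsq₁, hsq₂, hr, hdvd⟩
    obtain ⟨s, t, hsq⟩ := exists_isSquare_signFactor hA hr
    obtain ⟨n, h⟩ := exists_sqrtProduct_eq_zero (hsq₁.mul hsq) hsq₂ hdvd
    exact ⟨s, t, n, h⟩

/-- A number whose positivity expresses the conditions `c ≠ 0`, `0 ≤ g < N`, `A < B` and
`4 D ^ 2 < K ^ 2`: it is `c ^ 2 K ^ 2 N ^ 2 B` times
`1 - ((2 g + 1 - N) / N) ^ 2 - (2 D / K) ^ 2 - A / B`. -/
def rangePoly (c K N A B g D : R) : R :=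
  c ^ 2 * (K ^ 2 * N ^ 2 * B - K ^ 2 * B * (2 * g + 1 - N) ^ 2 - 4 * N ^ 2 * B * D ^ 2 -
    K ^ 2 * N ^ 2 * A)

theorem map_rangePoly {R' : Type*} [CommRing R'] (f : R →+* R') (c K N A B g D : R) :
    f (rangePoly c K N A B g D) = rangePoly (f c) (f K) (f N) (f A) (f B) (f g) (f D) := by
  simp [rangePoly, map_ofNat]

theorem of_rangePoly_pos {c K N A B g D : ℤ} (hN : 0 < N) (hB : 0 < B) (hA : 0 ≤ A)
    (h : 0 < rangePoly c K N A B g D) :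
    c ≠ 0 ∧ 0 ≤ g ∧ g < N ∧ A < B ∧ 4 * D ^ 2 < K ^ 2 := by
  have hc : c ≠ 0 := by
    rintro rfl
    simp [rangePoly] at h
  have h0 := pos_of_mul_pos_right h (sq_nonneg c)
  have hnonneg_g : 0 ≤ K ^ 2 * B * (2 * g + 1 - N) ^ 2 := by positivity
  have hnonneg_D : 0 ≤ N ^ 2 * B * (4 * D ^ 2) := by positivity
  have hnonneg_A : 0 ≤ K ^ 2 * N ^ 2 * A := by positivity
  have hg : K ^ 2 * B * (2 * g + 1 - N) ^ 2 < K ^ 2 * B * N ^ 2 := by linarith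
  have hD : N ^ 2 * B * (4 * D ^ 2) < N ^ 2 * B * K ^ 2 := by linarith
  have hAB : K ^ 2 * N ^ 2 * A < K ^ 2 * N ^ 2 * B := by linarith
  have hlt := abs_lt_of_sq_lt_sq' (lt_of_mul_lt_mul_left hg (by positivity)) hN.le
  exact ⟨hc, by linarith, by linarith, lt_of_mul_lt_mul_left hAB (by positivity),
    lt_of_mul_lt_mul_left hD (by positivity)⟩

theorem rangePoly_pos {c K N A B g D : ℤ} (hB : 0 < B) (hc : c ≠ 0) (hg0 : 0 ≤ g)
    (hg : g < N) (hAB : 4 * N * A ≤ B) (hD : 8 * N * D ^ 2 < K ^ 2) :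
    0 < rangePoly c K N A B g D := by
  have hN : 0 < N := hg0.trans_lt hg
  refine mul_pos (sq_pos_of_ne_zero hc) ?_
  have hsq : (2 * g + 1 - N) ^ 2 ≤ N ^ 2 - N := by
    nlinarith [mul_nonneg hg0 (by linarith : 0 ≤ N - 1 - g)]
  have h₁ : K ^ 2 * B * (2 * g + 1 - N) ^ 2 ≤ K ^ 2 * B * (N ^ 2 - N) := by gcongr
  have h₂ : N * B * (8 * N * D ^ 2) < N * B * K ^ 2 := by gcongr
  have h₃ : K ^ 2 * N * (4 * N * A) ≤ K ^ 2 * N * B := by gcongr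
  have h₄ : 0 ≤ K ^ 2 * N * B := by positivity
  linarith

end Combination

/-! ### The polynomial in eleven unknowns -/

namespace ZeroCode

variable {ν : ℕ}

theorem base_pow_eq {R : Type*} [CommRing R] (p : ZeroCode ν R) (n : ℕ) :
    p.base ^ n = 2 ^ ((p.κ + 2) * n) * p.b ^ ((p.deg + 1) * n) := by
  rw [pow_mul, pow_mul, ← mul_pow, base, halfBase]
  ring

theorem four_mul_base_pow_mul_le {p : ZeroCode ν ℤ} {n : ℕ} (hc : 4 * 2 ^ ((p.κ + 2) * n) ≤ p.b)
    (ha : p.a ^ 2 ≤ p.b) :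
    4 * p.base ^ n * p.a ^ (2 * ((p.deg + 1) * n + 1)) ≤ p.b ^ (2 * ((p.deg + 1) * n + 1)) := by
  have hb : 0 ≤ p.b := (sq_nonneg _).trans ha
  set d := (p.deg + 1) * n
  calc 4 * p.base ^ n * p.a ^ (2 * (d + 1))
      = 4 * 2 ^ ((p.κ + 2) * n) * p.b ^ d * (p.a ^ 2) ^ (d + 1) := by
        rw [base_pow_eq, pow_mul p.a]
        ring
    _ ≤ p.b * p.b ^ d * p.b ^ (d + 1) := by gcongr
    _ = p.b ^ (2 * (d + 1)) := by ring

theorem base_pos {p : ZeroCode ν ℤ} (hb : 0 < p.b) : 0 < p.base := by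
  unfold base halfBase
  positivity

/-- The system expressing `b ∣ 2 ^ (2 X + 1)` and `N ^ 4 ∣ C(2X, X)` for the code `X`. -/
def binomSystem {R : Type*} [CommRing R] (p : ZeroCode ν R) (h k l w x y : R) : BinomSystem R :=
  ⟨p.code, p.N ^ 4, p.b, 8 * p.base ^ p.r, h, k, l, w, x, y⟩

theorem isPositive_binomSystem {p : ZeroCode ν ℤ} (hb : 0 < p.b) (h k l w x y : ℤ) :
    (p.binomSystem h k l w x y).IsPositive where
  one_le_Y := pow_pos (pow_pos (base_pos hb) _) _
  one_le_b := hb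
  one_le_Θ := mul_pos (by norm_num) (pow_pos (base_pos hb) _)

theorem map_binomSystem {R R' : Type*} [CommRing R] [CommRing R'] (φ : R →+* R')
    (p : ZeroCode ν R) (h k l w x y : R) :
    (p.map φ).binomSystem (φ h) (φ k) (φ l) (φ w) (φ x) (φ y) =
      (p.binomSystem h k l w x y).map φ := by
  simp [binomSystem, BinomSystem.map, map_code, map_N, map_base, r, map_ofNat]

/-- The number whose positivity expresses that `p` is bounded, that `l x ≠ 0` and that the gap of
`q` is small. The comparison of high powers of `a` and `b` expresses `a < b` with a margin. -/
def slack {R : Type*} [CommRing R] (p : ZeroCode ν R) (q : BinomSystem R) : R :=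
  rangePoly (q.l * q.x) q.K (p.base ^ p.r) (p.a ^ (2 * ((p.deg + 1) * p.r + 1)))
    (p.b ^ (2 * ((p.deg + 1) * p.r + 1))) p.g q.gap

theorem map_slack {R R' : Type*} [CommRing R] [CommRing R'] (φ : R →+* R') (p : ZeroCode ν R)
    (q : BinomSystem R) : (p.map φ).slack (q.map φ) = φ (p.slack q) := by
  simp [slack, map_rangePoly, map_base, BinomSystem.map_K, BinomSystem.map_gap, r]

/-- The polynomial whose zeros are the solutions of the system `q` with small gap, provided that `p`
is bounded, in the unknowns of `q` and three further unknowns `s`, `t` and `n`. -/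
def systemPoly {R : Type*} [CommRing R] (p : ZeroCode ν R) (q : BinomSystem R) (s t n : R) : R :=
  conjunctionPoly q.pell.product (pellForm q.a' q.K) (p.slack q) q.S q.T s t n

theorem map_systemPoly {R R' : Type*} [CommRing R] [CommRing R'] (φ : R →+* R')
    (p : ZeroCode ν R) (q : BinomSystem R) (s t n : R) :
    (p.map φ).systemPoly (q.map φ) (φ s) (φ t) (φ n) = φ (p.systemPoly q s t n) := by
  simp only [systemPoly, map_conjunctionPoly, map_slack, map_pellForm, BinomSystem.map_pell,
    PellSystem.map_product, BinomSystem.map_a', BinomSystem.map_K, BinomSystem.map_S,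
    BinomSystem.map_T]

theorem exists_systemPoly_eq_zero_iff {p : ZeroCode ν ℤ} {q : BinomSystem ℤ} (hq : q.IsPositive) :
    (∃ s t n, p.systemPoly q s t n = 0) ↔
      IsSquare q.pell.product ∧ IsSquare (pellForm q.a' q.K) ∧ 0 < p.slack q ∧ q.S ∣ q.T := by
  have ha := hq.three_lt_a
  have ha' := hq.a_lt_a'
  refine exists_conjunctionPoly_eq_zero_iff (PellSystem.product_pos ?_) ?_ ?_
  · exact (by linarith : 1 ≤ q.a)
  · linarith [one_le_pellForm (by linarith : 1 ≤ q.a') q.K]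
  · unfold BinomSystem.S
    linarith

theorem of_slack_pos {p : ZeroCode ν ℤ} {q : BinomSystem ℤ} (hδ : 1 ≤ p.deg) (ha : 0 ≤ p.a)
    (hb : 0 < p.b) (h : 0 < p.slack q) :
    p.IsBounded ∧ q.l ≠ 0 ∧ q.x ≠ 0 ∧ 4 * q.gap ^ 2 < q.K ^ 2 := by
  obtain ⟨hlx, hg0, hg, hab, hgap⟩ :=
    of_rangePoly_pos (pow_pos (base_pos hb) _) (pow_pos hb _) (pow_nonneg ha _) h
  exact ⟨⟨hδ, ha, lt_of_pow_lt_pow_left₀ _ hb.le hab, hg0, hg⟩, left_ne_zero_of_mul hlx,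
    right_ne_zero_of_mul hlx, hgap⟩

theorem slack_pos {p : ZeroCode ν ℤ} {q : BinomSystem ℤ} (hp : p.IsBounded)
    (hc : 4 * 2 ^ ((p.κ + 2) * p.r) ≤ p.b) (ha : p.a ^ 2 ≤ p.b) (hl : q.l ≠ 0) (hx : q.x ≠ 0)
    (hgap : 8 * p.base ^ p.r * q.gap ^ 2 < q.K ^ 2) : 0 < p.slack q :=
  rangePoly_pos (pow_pos hp.one_le_b _) (mul_ne_zero hl hx) hp.g_nonneg hp.g_lt
    (four_mul_base_pow_mul_le hc ha) hgap

theorem exists_eval_eq_zero {p : ZeroCode ν ℤ} (hp : p.IsBounded)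
    (hF : p.form.IsHomogeneous p.deg) {h k l w x y : ℤ}
    (hq : (p.binomSystem h k l w x y).IsSolution)
    (hgap : 4 * (p.binomSystem h k l w x y).gap ^ 2 < (p.binomSystem h k l w x y).K ^ 2) :
    ∃ z : Fin ν → ℕ,
      MvPolynomial.eval (Fin.cons 1 (Fin.cons p.a fun i ↦ (z i : ℤ))) p.form = 0 := by
  have hX := hp.one_le_b.trans hp.b_le_code
  lift p.code to ℕ using zero_le_one.trans hX with X hXp
  obtain ⟨hdvd_b, hdvd_N⟩ := hq.dvd_and_dvd_centralBinom
    (isPositive_binomSystem hp.one_le_b h k l w x y) hXp.symm (by exact_mod_cast hX) hgap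
  obtain ⟨j, hj⟩ : ∃ j, p.b = 2 ^ j := by
    change p.b ∣ _ at hdvd_b
    have hb := hp.one_le_b
    lift p.b to ℕ using zero_le_one.trans hb with b
    obtain ⟨j, -, hj⟩ := (Nat.dvd_prime_pow Nat.prime_two).1 (by exact_mod_cast hdvd_b)
    exact ⟨j, by exact_mod_cast hj⟩
  obtain ⟨X', hX', hiff⟩ := hp.exists_code_eq hF hj
  obtain rfl : X = X' := by exact_mod_cast hXp.trans hX'
  obtain ⟨z, -, -, hz⟩ := hiff.1 hdvd_N
  exact ⟨z, hz⟩

theorem exists_isSolution_binomSystem {p : ZeroCode ν ℤ} (hp : p.IsBounded)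
    (hF : p.form.IsHomogeneous p.deg) {j : ℕ} (hb : p.b = 2 ^ j) {z : Fin ν → ℕ}
    (hz : ∀ i, (z i : ℤ) < p.b) (hg : p.g = ∑ i, z i * p.base ^ (p.deg + 1) ^ (i + 2 : ℕ))
    (hzero : MvPolynomial.eval (Fin.cons 1 (Fin.cons p.a fun i ↦ (z i : ℤ))) p.form = 0) :
    ∃ h k l w x y, (p.binomSystem h k l w x y).IsSolution ∧
      8 * p.base ^ p.r * (p.binomSystem h k l w x y).gap ^ 2 <
        (p.binomSystem h k l w x y).K ^ 2 := by
  obtain ⟨X, hX, hiff⟩ := hp.exists_code_eq hF hb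
  have hpos := isPositive_binomSystem hp.one_le_b 0 0 0 0 0 0
  have hbX := hp.b_le_code
  rw [hb, hX] at hbX
  have hjX : j ≤ X := j.lt_two_pow_self.le.trans (by exact_mod_cast hbX)
  have hdvd : p.b ∣ 2 ^ (2 * X + 1) := by
    rw [hb]
    exact pow_dvd_pow _ (by omega)
  have hX1 : 1 ≤ X := by
    have := Nat.one_le_two_pow (n := j)
    zify at this
    exact_mod_cast this.trans hbX
  obtain ⟨⟨_, _, _, _, h, k, l, w, x, y⟩, rfl, rfl, rfl, rfl, hq, hgap⟩ :=
    BinomSystem.exists_isSolution_of_dvd hX1 hpos.one_le_Y hpos.one_le_b hpos.one_le_Θ hdvd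
      (hiff.2 ⟨z, hz, hg, hzero⟩)
  refine ⟨h, k, l, w, x, y, ?_⟩
  rw [binomSystem, hX]
  exact ⟨hq, hgap⟩

/-- The data coding the zeros `(1, a, z)` of `F` for a parameter `a` and the first two unknowns `f`
and `g`. The bound `b = (3 f + 1) ^ 2` is automatically positive, and can be any power of four. -/
def ofUnknowns {R : Type*} [CommRing R] (F : MvPolynomial (Fin (ν + 2)) ℤ) (δ : ℕ) (a f g : R) :
    ZeroCode ν R :=
  ⟨F, δ, a, (3 * f + 1) ^ 2, g⟩

theorem exists_sq_three_mul_add_one_eq_two_pow (n : ℕ) :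
    ∃ (f : ℤ) (j : ℕ), (3 * f + 1) ^ 2 = 2 ^ j ∧ (n : ℤ) < (3 * f + 1) ^ 2 := by
  obtain ⟨f, hf⟩ := exists_two_pow_eq_three_mul_add_one n
  have hsq : (3 * f + 1) ^ 2 = 2 ^ (n * 2) := by
    obtain h | h := hf <;> rw [← h, pow_mul]
    ring
  refine ⟨f, n * 2, hsq, ?_⟩
  rw [hsq]
  exact_mod_cast n.lt_two_pow_self.trans_le (Nat.pow_le_pow_right two_pos (by omega))

theorem IsBounded.sum_mul_base_pow_lt {p : ZeroCode ν ℤ} (hp : p.IsBounded) {z : Fin ν → ℕ}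
    (hz : ∀ i, (z i : ℤ) < p.b) :
    ∑ i, (z i : ℤ) * p.base ^ (p.deg + 1) ^ (i + 2 : ℕ) < p.base ^ p.r :=
  sum_mul_pow_lt hp.strictMono (fun i ↦ Int.natCast_nonneg (z i))
    (fun i ↦ by linarith [hz i, hp.four_mul_b_le_base, hp.one_le_b]) (by linarith [hp.four_le_base])

theorem exists_isBounded_ofUnknowns (F : MvPolynomial (Fin (ν + 2)) ℤ) {δ : ℕ} (hδ : 1 ≤ δ) (a : ℕ)
    (z : Fin ν → ℕ) : ∃ (f g : ℤ) (j : ℕ) (p : ZeroCode ν ℤ), p = ofUnknowns F δ (a : ℤ) f g ∧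
      p.IsBounded ∧ p.b = 2 ^ j ∧ (∀ i, (z i : ℤ) < p.b) ∧
      p.g = ∑ i, z i * p.base ^ (p.deg + 1) ^ (i + 2 : ℕ) ∧
      4 * 2 ^ ((p.κ + 2) * p.r) ≤ p.b ∧ p.a ^ 2 ≤ p.b := by
  let c := 4 * 2 ^ (((ofUnknowns F δ 0 0 0 : ZeroCode ν ℤ).κ + 2) *
    (ofUnknowns F δ 0 0 0 : ZeroCode ν ℤ).r)
  obtain ⟨f, j, hj, hlt⟩ := exists_sq_three_mul_add_one_eq_two_pow (a ^ 2 + a + c + ∑ i, z i)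
  have hle {m : ℕ} (hm : m ≤ a ^ 2 + a + c + ∑ i, z i) : m < (3 * f + 1) ^ 2 :=
    hlt.trans_le' (by exact_mod_cast hm)
  have ha : a < (3 * f + 1) ^ 2 := hle (by omega)
  have hz (i : Fin ν) : z i < (3 * f + 1) ^ 2 := hle <|
    (Finset.single_le_sum_of_canonicallyOrdered (Finset.mem_univ i)).trans (Nat.le_add_left _ _)
  let p := ofUnknowns F δ (a : ℤ) f 0
  have hb : 0 < p.b := (Int.natCast_nonneg a).trans_lt ha
  have hp : p.IsBounded := ⟨hδ, Int.natCast_nonneg a, ha, le_rfl, pow_pos (base_pos hb) _⟩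
  have hβ := hp.four_le_base
  let g := ∑ i, z i * p.base ^ (p.deg + 1) ^ (i + 2 : ℕ)
  have hg0 : 0 ≤ g := Finset.sum_nonneg fun i _ ↦ by positivity
  refine ⟨f, g, j, _, rfl, { hp with g_nonneg := hg0, g_lt := hp.sum_mul_base_pow_lt hz }, hj, hz,
    rfl, ?_, ?_⟩
  · exact_mod_cast (hle (m := c) (by omega)).le
  · exact_mod_cast (hle (m := a ^ 2) (by omega)).le

end ZeroCode

section Eleven

open ZeroCode

variable {ν : ℕ} {R : Type*} [CommRing R]

/-- The polynomial in the parameter `a = v 0` and the eleven unknowns `f`, `g`, `h`, `k`, `l`, `w`,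
`x`, `y`, `s`, `t`, `n`, listed in this order. -/
def elevenPoly (F : MvPolynomial (Fin (ν + 2)) ℤ) (δ : ℕ) (v : Fin 12 → R) : R :=
  let p := ofUnknowns F δ (v 0) (v 1) (v 2)
  p.systemPoly (p.binomSystem (v 3) (v 4) (v 5) (v 6) (v 7) (v 8)) (v 9) (v 10) (v 11)

theorem map_elevenPoly {R' : Type*} [CommRing R'] (f : R →+* R')
    (F : MvPolynomial (Fin (ν + 2)) ℤ) (δ : ℕ) (v : Fin 12 → R) :
    f (elevenPoly F δ v) = elevenPoly F δ (f ∘ v) := by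
  have hp : ofUnknowns F δ (f (v 0)) (f (v 1)) (f (v 2)) =
      (ofUnknowns F δ (v 0) (v 1) (v 2)).map f := by
    simp [ofUnknowns, ZeroCode.map, map_ofNat]
  simp only [elevenPoly, Function.comp_apply, hp, map_binomSystem, map_systemPoly]

theorem eval_elevenPoly_X (F : MvPolynomial (Fin (ν + 2)) ℤ) (δ : ℕ) (v : Fin 12 → ℤ) :
    MvPolynomial.eval v (elevenPoly F δ MvPolynomial.X) = elevenPoly F δ v := by
  rw [map_elevenPoly]
  congr 1
  exact funext fun i ↦ MvPolynomial.eval_X i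

theorem exists_eval_eq_zero_of_elevenPoly_eq_zero {F : MvPolynomial (Fin (ν + 2)) ℤ} {δ : ℕ}
    (hF : F.IsHomogeneous δ) (hδ : 1 ≤ δ) {v : Fin 12 → ℤ} (ha : 0 ≤ v 0)
    (h : elevenPoly F δ v = 0) :
    ∃ z : Fin ν → ℕ, MvPolynomial.eval (Fin.cons 1 (Fin.cons (v 0) fun i ↦ (z i : ℤ))) F = 0 := by
  have hb : 0 < (ofUnknowns F δ (v 0) (v 1) (v 2)).b := sq_pos_of_ne_zero (by omega)
  obtain ⟨hsq, hsq', hslack, hdvd⟩ :=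
    (exists_systemPoly_eq_zero_iff (isPositive_binomSystem hb ..)).1 ⟨_, _, _, h⟩
  obtain ⟨hp, hl, hx, hgap⟩ := of_slack_pos hδ ha hb hslack
  exact exists_eval_eq_zero (p := ofUnknowns F δ (v 0) (v 1) (v 2)) hp hF
    ⟨hl, hx, hsq, hsq', hdvd⟩ hgap

theorem exists_elevenPoly_eq_zero {F : MvPolynomial (Fin (ν + 2)) ℤ} {δ : ℕ}
    (hF : F.IsHomogeneous δ) (hδ : 1 ≤ δ) {a : ℕ} {z : Fin ν → ℕ}
    (h : MvPolynomial.eval (Fin.cons 1 (Fin.cons (a : ℤ) fun i ↦ (z i : ℤ))) F = 0) :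
    ∃ v : Fin 11 → ℤ, elevenPoly F δ (Fin.cons (a : ℤ) v) = 0 := by
  obtain ⟨f, g, j, p, rfl, hp, hb, hz, hg, hc, ha⟩ := exists_isBounded_ofUnknowns F hδ a z
  obtain ⟨h, k, l, w, x, y, hq, hgap⟩ :=
    exists_isSolution_binomSystem (p := ofUnknowns F δ a f g) hp hF hb hz hg h
  have hpos := isPositive_binomSystem hp.one_le_b h k l w x y
  have hslack := slack_pos hp hc ha hq.l_ne_zero hq.x_ne_zero hgap
  obtain ⟨s, t, n, h0⟩ := (exists_systemPoly_eq_zero_iff hpos).2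
    ⟨hq.isSquare_product, hq.isSquare_pellForm, hslack, hq.dvd⟩
  exact ⟨![f, g, h, k, l, w, x, y, s, t, n], h0⟩

end Eleven

/-- **Eleven unknowns over ℤ.** For every polynomial `P ∈ ℤ[a, z₁, …, z_ν]`
there is a polynomial `Q̃ ∈ ℤ[a, z₁, …, z₁₁]` such that, for every parameter
`a ∈ ℕ`, `P` has a solution in natural numbers iff `Q̃` has a solution in
integers. -/
theorem eleven_unknowns_over_int (ν : ℕ) (P : MvPolynomial (Fin (ν + 1)) ℤ) :
    ∃ Q : MvPolynomial (Fin 12) ℤ, ∀ a : ℕ,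
      (∃ z : Fin ν → ℕ,
          MvPolynomial.eval (Fin.cons (a : ℤ) (fun i => (z i : ℤ))) P = 0) ↔
      (∃ z : Fin 11 → ℤ, MvPolynomial.eval (Fin.cons (a : ℤ) z) Q = 0) := by
  obtain ⟨F, hF, heval⟩ := exists_isHomogeneous_eval_cons_one_eq P P.totalDegree.le_succ
  have hδ : 1 ≤ P.totalDegree.succ := Nat.succ_pos _
  generalize P.totalDegree.succ = δ at hF hδ
  refine ⟨elevenPoly F δ MvPolynomial.X, fun a ↦ ⟨?_, ?_⟩⟩
  · rintro ⟨z, hz⟩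
    rw [← heval] at hz
    obtain ⟨v, hv⟩ := exists_elevenPoly_eq_zero hF hδ hz
    exact ⟨v, (eval_elevenPoly_X F δ _).trans hv⟩
  · rintro ⟨v, hv⟩
    rw [eval_elevenPoly_X] at hv
    obtain ⟨z, hz⟩ := exists_eval_eq_zero_of_elevenPoly_eq_zero hF hδ
      (v := Fin.cons (a : ℤ) v) (Int.natCast_nonneg a) hv
    exact ⟨z, (heval _).symm.trans hz⟩
end

section
/- Let N be a power of 2 and let S, T ∈ ℕ with 0 ≤ S, T < N. Set R := (S + T + 1)·N + T + 1. Then τ(S, T) = 0 if and only if N² divides the binomial coefficient C(2(N−1)R, (N−1)R). -/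
/-- `σ(a)`: the sum of the binary digits of `a`. -/
def binDigitSum (a : ℕ) : ℕ := (Nat.digits 2 a).sum

/-- `τ(a, b) = σ(a) + σ(b) − σ(a+b)`: the number of carries in the base-2
addition of `a` and `b`. -/
def carries (a b : ℕ) : ℤ :=
  (binDigitSum a : ℤ) + (binDigitSum b : ℤ) - (binDigitSum (a + b) : ℤ)

/-!
By Kummer's theorem, `τ(a, b)` is the `2`-adic valuation of `C(a + b, a)`. In particular `τ` is
nonnegative, and the valuation of `C(2m, m)` is `τ(m, m) = σ(m)`. For `m = (N - 1)R` and
`N = 2 ^ k`, the base-`N` digits of `m` are `S + T`, `N - 1 - S`, `N - 1 - T` (the leading one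
possibly exceeding `N - 1`). Subtracting from `N - 1` flips all `k` bits, so
`σ(m) = σ(S + T) + (k - σ(S)) + (k - σ(T)) = 2k - τ(S, T)`, which is at least `2k` exactly when
`τ(S, T) = 0`.
-/

theorem sum_digits_eq_mod_add_sum_digits_div (b n : ℕ) :
    (b.digits n).sum = n % b + (b.digits (n / b)).sum := by
  rcases n.eq_zero_or_pos with rfl | hn
  · simp
  rcases b with _ | _ | b
  · simp [Nat.digits_zero_succ' hn.ne']
  · simp [Nat.mod_one]
  · simp [Nat.digits_def' (Nat.one_lt_succ_succ b) hn]

theorem sum_digits_add_pow_mul {b k a : ℕ} (ha : a < b ^ k) (c : ℕ) :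
    (b.digits (a + b ^ k * c)).sum = (b.digits a).sum + (b.digits c).sum := by
  induction k generalizing a with
  | zero => simp [Nat.lt_one_iff.mp ha]
  | succ k ih =>
    rw [pow_succ'] at ha ⊢
    have hb : 0 < b := Nat.pos_of_mul_pos_right (Nat.zero_lt_of_lt ha)
    rw [sum_digits_eq_mod_add_sum_digits_div, mul_assoc, Nat.add_mul_mod_self_left,
      Nat.add_mul_div_left _ _ hb, ih (Nat.div_lt_of_lt_mul ha),
      sum_digits_eq_mod_add_sum_digits_div b a, add_assoc]

theorem mod_add_mod_add_one_eq_of_dvd {b a c : ℕ} (h : b ∣ a + c + 1) :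
    a % b + c % b + 1 = b := by
  have hdvd : b ∣ a % b + c % b + 1 := by
    simpa [Nat.dvd_iff_mod_eq_zero, Nat.add_mod] using h
  have hb : 0 < b := Nat.pos_of_dvd_of_pos h (Nat.succ_pos _)
  have ha := a.mod_lt hb
  have hc := c.mod_lt hb
  exact Nat.eq_of_dvd_of_lt_two_mul (Nat.succ_ne_zero _) hdvd (by lia)

theorem sum_digits_add_sum_digits_of_add_add_one_eq_pow {b k a c : ℕ} (h : a + c + 1 = b ^ k) :
    (b.digits a).sum + (b.digits c).sum = k * (b - 1) := by
  induction k generalizing a c with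
  | zero =>
    obtain ⟨rfl, rfl⟩ : a = 0 ∧ c = 0 := by simpa using h
    simp
  | succ k ih =>
    rw [pow_succ'] at h
    have hb : 0 < b := Nat.pos_of_mul_pos_right (h.symm.trans_gt (Nat.succ_pos _))
    have hmod : a % b + c % b + 1 = b := mod_add_mod_add_one_eq_of_dvd ⟨_, h⟩
    have hdiv : a / b + c / b + 1 = b ^ k := by
      apply Nat.eq_of_mul_eq_mul_left hb
      linarith [Nat.mod_add_div a b, Nat.mod_add_div c b]
    rw [sum_digits_eq_mod_add_sum_digits_div b a, sum_digits_eq_mod_add_sum_digits_div b c,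
      add_one_mul, ← ih hdiv]
    lia

theorem sub_one_mul_eq_base_expansion {N S T : ℕ} (hS : S < N) (hT : T < N) :
    (N - 1) * ((S + T + 1) * N + T + 1) = N - 1 - T + N * (N - 1 - S + N * (S + T)) := by
  zify [show 1 ≤ N by lia, show S ≤ N - 1 by lia, show T ≤ N - 1 by lia]
  ring

theorem sum_digits_pow_sub_one_mul {b k S T : ℕ} (hS : S < b ^ k) (hT : T < b ^ k) :
    (b.digits ((b ^ k - 1) * ((S + T + 1) * b ^ k + T + 1))).sum +
        ((b.digits S).sum + (b.digits T).sum) =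
      2 * (k * (b - 1)) + (b.digits (S + T)).sum := by
  have hS' := sum_digits_add_sum_digits_of_add_add_one_eq_pow
    (show S + (b ^ k - 1 - S) + 1 = b ^ k by lia)
  have hT' := sum_digits_add_sum_digits_of_add_add_one_eq_pow
    (show T + (b ^ k - 1 - T) + 1 = b ^ k by lia)
  rw [sub_one_mul_eq_base_expansion hS hT, sum_digits_add_pow_mul (by lia),
    sum_digits_add_pow_mul (by lia)]
  lia

-- Unlike Mathlib's form of Kummer's theorem, this avoids truncated subtraction, so it also shows
-- that digit sums are subadditive.
theorem sum_digits_add_sum_digits_eq_add_padicValNat_choose (p : ℕ) [Fact p.Prime] (a b : ℕ) :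
    (p.digits a).sum + (p.digits b).sum =
      (p.digits (a + b)).sum + (p - 1) * padicValNat p ((a + b).choose a) := by
  have hval : padicValNat p ((a + b).choose a) + padicValNat p a.factorial +
      padicValNat p b.factorial = padicValNat p (a + b).factorial := by
    have hchoose : (a + b).choose a ≠ 0 := (Nat.choose_pos (Nat.le_add_right a b)).ne'
    rw [← Nat.add_choose_mul_factorial_mul_factorial, ← Nat.choose_symm_add,
      padicValNat.mul (mul_ne_zero hchoose a.factorial_ne_zero) b.factorial_ne_zero,
      padicValNat.mul hchoose a.factorial_ne_zero]
  have hmul := congrArg ((p - 1) * ·) hval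
  simp only [mul_add, sub_one_mul_padicValNat_factorial] at hmul
  have ha := Nat.digit_sum_le p a
  have hb := Nat.digit_sum_le p b
  have hab := Nat.digit_sum_le p (a + b)
  lia

theorem carries_eq_padicValNat_choose (a b : ℕ) :
    carries a b = padicValNat 2 ((a + b).choose a) := by
  have h := sum_digits_add_sum_digits_eq_add_padicValNat_choose 2 a b
  unfold carries binDigitSum
  lia

theorem carries_nonneg (a b : ℕ) : 0 ≤ carries a b := by
  simp [carries_eq_padicValNat_choose]

theorem carries_self (a : ℕ) : carries a a = binDigitSum a := by
  have h : binDigitSum (a + a) = binDigitSum a := by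
    rw [← two_mul, binDigitSum, sum_digits_eq_mod_add_sum_digits_div]
    simp [binDigitSum]
  simp [carries, h]

theorem two_pow_dvd_choose_two_mul_iff (j m : ℕ) :
    2 ^ j ∣ (2 * m).choose m ↔ j ≤ binDigitSum m := by
  have hval : padicValNat 2 ((2 * m).choose m) = binDigitSum m := by
    rw [two_mul]
    exact_mod_cast (carries_eq_padicValNat_choose m m).symm.trans (carries_self m)
  rw [padicValNat_dvd_iff_le (Nat.choose_pos (by lia)).ne', hval]

theorem binDigitSum_two_pow_sub_one_mul {k S T : ℕ} (hS : S < 2 ^ k) (hT : T < 2 ^ k) :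
    (binDigitSum ((2 ^ k - 1) * ((S + T + 1) * 2 ^ k + T + 1)) : ℤ) = 2 * k - carries S T := by
  have h := sum_digits_pow_sub_one_mul hS hT
  unfold carries binDigitSum
  lia

/-- Let `N` be a power of 2 and `S, T < N`. With `R := (S+T+1)N + T + 1`,
`τ(S, T) = 0` iff `N² ∣ C(2(N−1)R, (N−1)R)`. -/
theorem carries_eq_zero_iff_sq_dvd_choose (N S T : ℕ) (hN : ∃ k : ℕ, N = 2 ^ k)
    (hS : S < N) (hT : T < N) :
    carries S T = 0 ↔
      N ^ 2 ∣ Nat.choose (2 * ((N - 1) * ((S + T + 1) * N + T + 1)))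
        ((N - 1) * ((S + T + 1) * N + T + 1)) := by
  obtain ⟨k, rfl⟩ := hN
  rw [← pow_mul, two_pow_dvd_choose_two_mul_iff]
  have hsum := binDigitSum_two_pow_sub_one_mul hS hT
  have hnonneg := carries_nonneg S T
  lia
end

section
/- Let A be an integer with A ≥ 3 and set d := A² − 4. Then a pair (X, Y) ∈ ℕ² satisfies Pell's equation X² − d·Y² = 4 if and only if there exists n ∈ ℤ such that X = χ_n(A) and Y = ψ_n(A). -/
/-- The Lucas sequence `ψ_n(A)` for natural indices:
`ψ_0 = 0`, `ψ_1 = 1`, `ψ_{n+2} = A·ψ_{n+1} − ψ_n`. -/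
def psiNat (A : ℤ) : ℕ → ℤ
  | 0 => 0
  | 1 => 1
  | n + 2 => A * psiNat A (n + 1) - psiNat A n

/-- The Lucas sequence `χ_n(A)` for natural indices:
`χ_0 = 2`, `χ_1 = A`, `χ_{n+2} = A·χ_{n+1} − χ_n`. -/
def chiNat (A : ℤ) : ℕ → ℤ
  | 0 => 2
  | 1 => A
  | n + 2 => A * chiNat A (n + 1) - chiNat A n

/-- The Lucas sequence `ψ_n(A)` for `n ∈ ℤ`: the unique solution of
`x_{n+1} = A·x_n − x_{n−1}` with `ψ_0 = 0`, `ψ_1 = 1`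
(for negative indices, `ψ_{−n} = −ψ_n`). -/
def psi (A : ℤ) : ℤ → ℤ
  | .ofNat n => psiNat A n
  | .negSucc n => -psiNat A (n + 1)

/-- The Lucas sequence `χ_n(A)` for `n ∈ ℤ`: the unique solution of
`x_{n+1} = A·x_n − x_{n−1}` with `χ_0 = 2`, `χ_1 = A`
(for negative indices, `χ_{−n} = χ_n`). -/
def chi (A : ℤ) : ℤ → ℤ
  | .ofNat n => chiNat A n
  | .negSucc n => chiNat A (n + 1)

/-!
Write `d = A² − 4`. The substitution `X = 2b − Aa`, `Y = a` is integral by parity and turns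
`X² − dY² = 4` into `a² − Aab + b² = 1`, the relation between consecutive terms `a = ψ_n`,
`b = ψ_{n+1}` of the Lucas sequence. The step `(a, b) ↦ (Aa − b, a)` of the backward recurrence
preserves this relation and decreases `a` as long as `0 < a < b`, so it leads every solution
with `0 ≤ a < b` down to `(ψ_0, ψ_1) = (0, 1)`.
-/

section Chebyshev

open Polynomial.Chebyshev

theorem psiNat_eq_eval_S (A : ℤ) (n : ℕ) : psiNat A n = (S ℤ (n - 1)).eval A := by
  induction n using Nat.twoStepInduction with
  | zero => simp [psiNat]
  | one => simp [psiNat]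
  | more n ih₀ ih₁ =>
    have hindex : ((n + 2 : ℕ) : ℤ) - 1 = n - 1 + 2 := by push_cast; ring
    rw [hindex, S_add_two]
    simp [psiNat, ih₀, ih₁]

theorem chiNat_eq_eval_C (A : ℤ) (n : ℕ) : chiNat A n = (C ℤ n).eval A := by
  induction n using Nat.twoStepInduction with
  | zero => simp [chiNat]
  | one => simp [chiNat]
  | more n ih₀ ih₁ => simp [chiNat, ih₀, ih₁, C_add_two]

theorem psi_eq_eval_S (A n : ℤ) : psi A n = (S ℤ (n - 1)).eval A := by
  cases n with
  | ofNat n => exact psiNat_eq_eval_S A n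
  | negSucc n =>
    rw [psi, psiNat_eq_eval_S, Int.negSucc_eq, S_neg_sub_one, Polynomial.eval_neg, Nat.cast_succ]

theorem chi_eq_eval_C (A n : ℤ) : chi A n = (C ℤ n).eval A := by
  cases n with
  | ofNat n => exact chiNat_eq_eval_C A n
  | negSucc n => rw [chi, chiNat_eq_eval_C, Int.negSucc_eq, C_neg, Nat.cast_succ]

theorem psi_neg (A n : ℤ) : psi A (-n) = -psi A n := by
  simp only [psi_eq_eval_S, S_neg_sub_one, Polynomial.eval_neg]

theorem chi_neg (A n : ℤ) : chi A (-n) = chi A n := by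
  simp only [chi_eq_eval_C, C_neg]

theorem psi_add_one (A n : ℤ) : psi A (n + 1) = A * psi A n - psi A (n - 1) := by
  simp [psi_eq_eval_S, S_eq ℤ n, sub_sub]

theorem chi_eq_two_mul_psi_sub (A n : ℤ) : chi A n = 2 * psi A (n + 1) - A * psi A n := by
  simp [chi_eq_eval_C, psi_eq_eval_S, C_eq_S_sub_X_mul_S]

theorem psi_sq_add_psi_sq (A n : ℤ) :
    psi A n ^ 2 + psi A (n + 1) ^ 2 - A * psi A n * psi A (n + 1) = 1 := by
  simpa [psi_eq_eval_S] using congrArg (Polynomial.eval A) (S_sq_add_S_sq ℤ (n - 1))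

end Chebyshev

theorem chi_sq_sub_mul_psi_sq (A n : ℤ) : chi A n ^ 2 - (A ^ 2 - 4) * psi A n ^ 2 = 4 := by
  rw [chi_eq_two_mul_psi_sub]
  linear_combination 4 * psi_sq_add_psi_sq A n

theorem exists_eq_psi_of_sq_add_sq {A a b : ℤ} (ha : 0 ≤ a) (hab : a < b)
    (h : a ^ 2 + b ^ 2 - A * a * b = 1) : ∃ n : ℤ, a = psi A n ∧ b = psi A (n + 1) := by
  induction hk : a.toNat using Nat.strong_induction_on generalizing a b with
  | _ k ih =>
    rcases ha.eq_or_lt with rfl | ha_pos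
    · have hb : b = 1 := by nlinarith
      exact ⟨0, rfl, hb⟩
    · have hprod : b * (A * a - b) = a ^ 2 - 1 := by linear_combination -h
      have hb_pos : 0 < b := ha_pos.trans hab
      have hnonneg : 0 ≤ A * a - b := by
        refine nonneg_of_mul_nonneg_right ?_ hb_pos
        rw [hprod]
        nlinarith
      have hlt : A * a - b < a := by
        refine lt_of_mul_lt_mul_left ?_ hb_pos.le
        calc b * (A * a - b) = a ^ 2 - 1 := hprod
          _ < a * a := by linarith
          _ ≤ b * a := by gcongr
      obtain ⟨n, hn, hn'⟩ :=
        ih (A * a - b).toNat (by lia) hnonneg hlt (by linear_combination h) rfl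
      refine ⟨n + 1, hn', ?_⟩
      rw [psi_add_one, add_sub_cancel_right, ← hn, ← hn']
      ring

theorem even_add_mul_of_pell {A X Y : ℤ} (h : X ^ 2 - (A ^ 2 - 4) * Y ^ 2 = 4) :
    Even (X + A * Y) := by
  have hsq : Even (X ^ 2 - (A * Y) ^ 2) := ⟨2 - 2 * Y ^ 2, by linear_combination h⟩
  simpa only [Int.even_sub, Int.even_pow' two_ne_zero, Int.even_add] using hsq

theorem exists_eq_chi_psi_of_nonneg {A X Y : ℤ} (hA : 2 ≤ A) (hX : 0 ≤ X) (hY : 0 ≤ Y)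
    (h : X ^ 2 - (A ^ 2 - 4) * Y ^ 2 = 4) : ∃ n : ℤ, X = chi A n ∧ Y = psi A n := by
  obtain ⟨b, hb⟩ := even_add_mul_of_pell h
  have hquad : Y ^ 2 + b ^ 2 - A * Y * b = 1 := by
    obtain rfl : X = 2 * b - A * Y := by linear_combination hb
    linarith
  have hd : 0 ≤ A ^ 2 - 4 := by nlinarith
  have hX_ne : X ≠ 0 := by
    rintro rfl
    linarith [mul_nonneg hd (sq_nonneg Y)]
  have hX_pos : 0 < X := hX.lt_of_ne' hX_ne
  have hlt : Y < b := by linarith [mul_le_mul_of_nonneg_right hA hY]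
  obtain ⟨n, rfl, rfl⟩ := exists_eq_psi_of_sq_add_sq hY hlt hquad
  exact ⟨n, by rw [chi_eq_two_mul_psi_sub]; linear_combination hb, rfl⟩

theorem pell_solutions_general {A X : ℤ} (hA : 2 ≤ A) (hX : 0 ≤ X) (Y : ℤ) :
    X ^ 2 - (A ^ 2 - 4) * Y ^ 2 = 4 ↔ ∃ n : ℤ, X = chi A n ∧ Y = psi A n := by
  constructor
  · intro h
    rcases le_total 0 Y with hY | hY
    · exact exists_eq_chi_psi_of_nonneg hA hX hY h
    · obtain ⟨n, hXn, hYn⟩ :=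
        exists_eq_chi_psi_of_nonneg hA hX (neg_nonneg.mpr hY) (by rwa [neg_sq])
      exact ⟨-n, by rw [chi_neg, hXn], by rw [psi_neg, ← hYn, neg_neg]⟩
  · rintro ⟨n, rfl, rfl⟩
    exact chi_sq_sub_mul_psi_sq A n

/-- **Pell's equation.** For an integer `A ≥ 3` and `d := A² − 4`, the
solutions `(X, Y) ∈ ℕ²` of `X² − d·Y² = 4` are exactly the pairs
`(χ_n(A), ψ_n(A))` for `n ∈ ℤ`. -/
theorem pell_solutions (A : ℤ) (hA : 3 ≤ A) (X Y : ℕ) :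
    (X : ℤ) ^ 2 - (A ^ 2 - 4) * (Y : ℤ) ^ 2 = 4 ↔
      ∃ n : ℤ, (X : ℤ) = chi A n ∧ (Y : ℤ) = psi A n :=
  pell_solutions_general (by lia) X.cast_nonneg Y
end
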